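/- arXiv:2301.11192 — 2 statements merged into one kernel-verified Lean document; each statement's English description precedes it below -/
import Mathlib

section
/- Let p be an odd prime such that the Diophantine equation 8x^2 + 27y^2 = jp has a primitive solution for some j ∈ {1, 4, 8}. Let r be the integer with 24r ≡ 1 (mod p) and 1 ≤ −r ≤ p−1. Then for every integer n ≥ 0 and every integer β with 0 ≤ β < p and 24pβ ≠ 11(p^2 + 24r − 1), one has b₂₁(4(p^2 n + βp − 11r) + 1) ≡ 0 (mod 2). -/
/-- `b21 n` is the number of 21-regular partitions of `n`,
i.e. partitions of `n` none of whose parts is divisible by 21. -/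
def b21 (n : ℕ) : ℕ :=
  (Finset.univ.filter fun c : n.Partition => ∀ i ∈ c.parts, ¬ (21 ∣ i)).card

section Helpers

theorem card_half {α : Type*} [DecidableEq α] (S : Finset α) (σ : α → α) (P : α → Prop)
    [DecidablePred P] (hσ : ∀ s ∈ S, σ s ∈ S) (hσσ : ∀ s, σ (σ s) = s)
    (hP : ∀ s ∈ S, P (σ s) ↔ ¬ P s) : S.card = 2 * (S.filter P).card := by
  have h1 := Finset.card_filter_add_card_filter_not (s := S) P
  have h2 : (S.filter P).card = (S.filter (fun a => ¬ P a)).card := by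
    apply Finset.card_bij (fun a _ => σ a)
    · intro a ha
      simp only [Finset.mem_filter] at ha ⊢
      exact ⟨hσ a ha.1, by rw [hP a ha.1]; exact not_not.mpr ha.2⟩
    · intro a _ b _ hab
      rw [← hσσ a, hab, hσσ]
    · intro b hb
      simp only [Finset.mem_filter] at hb
      exact ⟨σ b, by simp only [Finset.mem_filter]; exact ⟨hσ b hb.1, (hP b hb.1).mpr hb.2⟩, hσσ b⟩
  omega

theorem card_four (V : Finset (ℤ × ℤ)) (h1 : ∀ v ∈ V, (-v.1, v.2) ∈ V)
    (h2 : ∀ v ∈ V, (v.1, -v.2) ∈ V) (h0 : ∀ v ∈ V, v.1 ≠ 0 ∧ v.2 ≠ 0) : 4 ∣ V.card := by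
  have e1 := card_half V (fun v => (-v.1, v.2)) (fun v => 0 < v.1) h1 (by simp)
    (by intro s hs; have := h0 s hs; simp only; omega)
  have e2 := card_half (V.filter (fun v => 0 < v.1)) (fun v => (v.1, -v.2)) (fun v => 0 < v.2)
    (by
      intro s hs
      simp only [Finset.mem_filter] at hs ⊢
      exact ⟨h2 s hs.1, hs.2⟩) (by simp)
    (by intro s hs; have := h0 s (Finset.mem_filter.mp hs).1; simp only; omega)
  omega

theorem card_two_to_one {α β : Type*} [DecidableEq α] [DecidableEq β] (U : Finset β)
    (V : Finset α) (h : α → β) (hmap : ∀ v ∈ V, h v ∈ U)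
    (hf : ∀ u ∈ U, ∃ v w, v ≠ w ∧ ∀ t, (t ∈ V ∧ h t = u) ↔ (t = v ∨ t = w)) :
    V.card = 2 * U.card := by
  rw [Finset.card_eq_sum_card_fiberwise (f := h) (t := U) hmap]
  rw [Finset.sum_const_nat (m := 2), mul_comm]
  intro u hu
  obtain ⟨v, w, hvw, H⟩ := hf u hu
  rw [← Finset.card_pair hvw]
  congr 1
  ext t
  simp [H]

theorem exists_finset (A B : ℤ) (hA : 0 < A) (hB : 0 < B) (M : ℤ) (Q : ℤ → ℤ → Prop) :
    ∃ V : Finset (ℤ × ℤ), ∀ u v, (u, v) ∈ V ↔ (A * u ^ 2 + B * v ^ 2 = M ∧ Q u v) := by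
  classical
  refine ⟨((Finset.Icc (-M) M) ×ˢ (Finset.Icc (-M) M)).filter
    (fun v => A * v.1 ^ 2 + B * v.2 ^ 2 = M ∧ Q v.1 v.2), ?_⟩
  intro u v
  simp only [Finset.mem_filter, Finset.mem_product, Finset.mem_Icc, and_iff_right_iff_imp]
  rintro ⟨h, -⟩
  have key : ∀ t : ℤ, -(t^2) ≤ t ∧ t ≤ t^2 := by
    intro t
    constructor
    · nlinarith [Int.le_self_sq (-t)]
    · exact Int.le_self_sq t
  have hu := key u
  have hv := key v
  have a1 : u ^ 2 ≤ A * u ^ 2 := le_mul_of_one_le_left (sq_nonneg u) hA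
  have a2 : v ^ 2 ≤ B * v ^ 2 := le_mul_of_one_le_left (sq_nonneg v) hB
  have := sq_nonneg u
  have := sq_nonneg v
  refine ⟨⟨?_, ?_⟩, ?_, ?_⟩ <;> linarith

theorem exists_finset_nat (A B : ℕ) (hA : 0 < A) (hB : 0 < B) (M : ℕ) (Q : ℕ → ℕ → Prop) :
    ∃ V : Finset (ℕ × ℕ), ∀ u v, (u, v) ∈ V ↔ (A * u ^ 2 + B * v ^ 2 = M ∧ Q u v) := by
  classical
  refine ⟨((Finset.range (M + 1)) ×ˢ (Finset.range (M + 1))).filter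
    (fun v => A * v.1 ^ 2 + B * v.2 ^ 2 = M ∧ Q v.1 v.2), ?_⟩
  intro u v
  simp only [Finset.mem_filter, Finset.mem_product, Finset.mem_range, and_iff_right_iff_imp]
  rintro ⟨h, -⟩
  have a1 : u ≤ A * u ^ 2 := (Nat.le_self_pow two_ne_zero u).trans (Nat.le_mul_of_pos_left _ hA)
  have a2 : v ≤ B * v ^ 2 := (Nat.le_self_pow two_ne_zero v).trans (Nat.le_mul_of_pos_left _ hB)
  omega

/-- two-to-one lemma specialised to an odd map. -/
theorem card_two_to_one' (U : Finset (ℕ × ℕ)) (V : Finset (ℤ × ℤ)) (f g : ℤ → ℤ → ℤ)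
    (hfo : ∀ u v, (u, v) ∈ V → f (-u) (-v) = - f u v) (hgo : ∀ u v, g (-u) (-v) = - g u v)
    (hV : ∀ u v, (u, v) ∈ V → (-u, -v) ∈ V)
    (hV0 : ((0, 0) : ℤ × ℤ) ∉ V)
    (hmap : ∀ u v, (u, v) ∈ V → ((f u v).natAbs, (g u v).natAbs) ∈ U)
    (hinj : ∀ u v u' v', (u, v) ∈ V → (u', v') ∈ V → f u v = f u' v' → g u v = g u' v' →
      u = u' ∧ v = v')
    (hex : ∀ x y : ℕ, (x, y) ∈ U → ∃ u v, (u, v) ∈ V ∧ f u v = x ∧ (g u v = y ∨ g u v = -y))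
    (hne : ∀ u v u' v', (u, v) ∈ V → (u', v') ∈ V → f u v = f u' v' → g u v = - g u' v' → False) :
    V.card = 2 * U.card := by
  apply card_two_to_one U V (fun t => ((f t.1 t.2).natAbs, (g t.1 t.2).natAbs))
  · rintro ⟨u, v⟩ h
    exact hmap u v h
  · rintro ⟨x, y⟩ hxy
    obtain ⟨u, v, huv, hf, hg⟩ := hex x y hxy
    refine ⟨(u, v), (-u, -v), ?_, ?_⟩
    · intro h
      simp only [Prod.mk.injEq] at h
      have e1 : u = 0 := by omega
      have e2 : v = 0 := by omega
      subst e1 e2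
      exact hV0 huv
    · rintro ⟨s, t⟩
      simp only [Prod.mk.injEq]
      constructor
      · rintro ⟨hst, h1, h2⟩
        have hst' := hV _ _ hst
        have n1 := hfo s t hst
        have n2 := hgo s t
        have c1 : f s t = f u v ∨ f (-s) (-t) = f u v := by omega
        have c2 : g s t = g u v ∨ g (-s) (-t) = g u v := by omega
        rcases c1 with c1 | c1 <;> rcases c2 with c2 | c2
        · left; exact hinj _ _ _ _ hst huv c1 c2
        · exact (hne _ _ _ _ hst huv c1 (by omega)).elim
        · exact (hne _ _ _ _ hst' huv c1 (by omega)).elim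
        · right
          have := hinj _ _ _ _ hst' huv c1 c2
          omega
      · rintro (⟨rfl, rfl⟩ | ⟨rfl, rfl⟩)
        · exact ⟨huv, by omega, by omega⟩
        · have n1 := hfo u v huv
          have n2 := hgo u v
          exact ⟨hV _ _ huv, by omega, by omega⟩

/-- splitting off the axes -/
theorem card_axes (V : Finset (ℤ × ℤ)) (h1 : ∀ u v, (u, v) ∈ V → (-u, v) ∈ V)
    (h2 : ∀ u v, (u, v) ∈ V → (u, -v) ∈ V) (h0 : ((0, 0) : ℤ × ℤ) ∉ V) :
    ∃ k, V.card = (V.filter (fun t => t.1 = 0)).card + (V.filter (fun t => t.2 = 0)).card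
      + 4 * k := by
  have e1 := Finset.card_filter_add_card_filter_not (s := V) (fun t => t.1 = 0)
  have e2 := Finset.card_filter_add_card_filter_not (s := V.filter (fun t => ¬ t.1 = 0))
    (fun t => t.2 = 0)
  have e3 : (V.filter (fun t => ¬ t.1 = 0)).filter (fun t => t.2 = 0)
      = V.filter (fun t => t.2 = 0) := by
    ext ⟨u, v⟩
    simp only [Finset.mem_filter]
    constructor
    · tauto
    · rintro ⟨a, b⟩
      refine ⟨⟨a, ?_⟩, b⟩
      rintro rfl
      subst b
      exact h0 a
  have e4 := card_four ((V.filter (fun t => ¬ t.1 = 0)).filter (fun t => ¬ t.2 = 0))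
    (by
      rintro ⟨u, v⟩ h
      simp only [Finset.mem_filter] at h ⊢
      exact ⟨⟨h1 _ _ h.1.1, by omega⟩, h.2⟩)
    (by
      rintro ⟨u, v⟩ h
      simp only [Finset.mem_filter] at h ⊢
      exact ⟨⟨h2 _ _ h.1.1, h.1.2⟩, by omega⟩)
    (by
      rintro ⟨u, v⟩ h
      simp only [Finset.mem_filter] at h ⊢
      exact ⟨h.1.2, h.2⟩)
  obtain ⟨k, hk⟩ := e4
  rw [e3] at e2
  exact ⟨k, by omega⟩

theorem card_axis_fst (V : Finset (ℤ × ℤ)) (P : Prop) [Decidable P]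
    (hyes : P → ∃ a : ℤ, a ≠ 0 ∧ ∀ u v, ((u, v) ∈ V ∧ u = 0) ↔ (u = 0 ∧ (v = a ∨ v = -a)))
    (hno : ¬ P → ∀ v, ((0, v) : ℤ × ℤ) ∉ V) :
    (V.filter (fun t => t.1 = 0)).card = if P then 2 else 0 := by
  split_ifs with h
  · obtain ⟨a, ha, H⟩ := hyes h
    have : ((0, a) : ℤ × ℤ) ≠ (0, -a) := by
      intro h; simp only [Prod.mk.injEq] at h; omega
    rw [← Finset.card_pair this]
    congr 1
    ext ⟨u, v⟩
    simp only [Finset.mem_filter, Finset.mem_insert, Finset.mem_singleton, Prod.mk.injEq, H]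
    tauto
  · rw [Finset.card_eq_zero, Finset.filter_eq_empty_iff]
    rintro ⟨u, v⟩ hv (rfl : u = 0)
    exact hno h v hv

theorem card_axis_snd (V : Finset (ℤ × ℤ)) (P : Prop) [Decidable P]
    (hyes : P → ∃ a : ℤ, a ≠ 0 ∧ ∀ u v, ((u, v) ∈ V ∧ v = 0) ↔ (v = 0 ∧ (u = a ∨ u = -a)))
    (hno : ¬ P → ∀ v, ((v, 0) : ℤ × ℤ) ∉ V) :
    (V.filter (fun t => t.2 = 0)).card = if P then 2 else 0 := by
  split_ifs with h
  · obtain ⟨a, ha, H⟩ := hyes h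
    have : ((a, 0) : ℤ × ℤ) ≠ (-a, 0) := by
      intro h; simp only [Prod.mk.injEq] at h; omega
    rw [← Finset.card_pair this]
    congr 1
    ext ⟨u, v⟩
    simp only [Finset.mem_filter, Finset.mem_insert, Finset.mem_singleton, Prod.mk.injEq, H]
    tauto
  · rw [Finset.card_eq_zero, Finset.filter_eq_empty_iff]
    rintro ⟨u, v⟩ hv (rfl : v = 0)
    exact hno h u hv

theorem odd_or_of_sq {M : ℕ} (hM : Odd M) {c a b : ℤ} (hc : Odd c) (h : 1 * a ^ 2 + c * b ^ 2 = M) :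
    Odd (a + b) := by
  by_contra hcon
  rw [Int.not_odd_iff_even] at hcon
  obtain ⟨k, hk⟩ := hcon
  obtain ⟨d, rfl⟩ := hc
  obtain ⟨m, rfl⟩ := hM
  have ha : a = 2 * k - b := by omega
  subst ha
  have : 2 * (2 * k ^ 2 - 2 * k * b + b ^ 2 + d * b ^ 2) = 2 * (m : ℤ) + 1 := by
    push_cast at h
    linarith
  omega

open Classical in
theorem eis (M : ℕ) (hM : Odd M) (U : Finset (ℕ × ℕ))
    (hU : ∀ x y, (x, y) ∈ U ↔ (x ^ 2 + 3 * y ^ 2 = 4 * M ∧ Odd x ∧ Odd y)) :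
    (U.card : ZMod 2) = (if ∃ k, M = k ^ 2 then 1 else 0) + (if ∃ k, M = 3 * k ^ 2 then 1 else 0) := by
  have hM0 : 0 < M := hM.pos
  obtain ⟨V, hV'⟩ := exists_finset 1 3 (by norm_num) (by norm_num) M (fun _ _ => True)
  have hV : ∀ u v, (u, v) ∈ V ↔ 1 * u ^ 2 + 3 * v ^ 2 = (M : ℤ) := by
    intro u v; rw [hV']; simp
  have hV0 : ((0, 0) : ℤ × ℤ) ∉ V := by
    rw [hV]; push_cast; intro h; omega
  have hc := card_two_to_one' U V (fun a b => a - 3 * b) (fun a b => a + b)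
    (by intros; ring) (by intros; ring)
    (by intro u v; rw [hV, hV]; intro h; rw [← h]; ring) hV0
    (by
      intro u v h
      rw [hV] at h
      rw [hU]
      have ho := odd_or_of_sq hM (by decide) h
      refine ⟨?_, ?_, ?_⟩
      · zify
        rw [sq_abs, sq_abs, ← h]; ring
      · rw [Int.natAbs_odd, show u - 3 * v = (u + v) - 2 * (2 * v) by ring]
        exact ho.sub_even (even_two_mul _)
      · rw [Int.natAbs_odd]; exact ho)
    (by intro u v u' v' _ _ h1 h2; omega)
    (by
      intro x y hxy
      rw [hU] at hxy
      obtain ⟨h, hx, hy⟩ := hxy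
      zify at h
      have hx' : (x : ℤ) % 2 = 1 := by obtain ⟨k, rfl⟩ := hx; omega
      have hy' : (y : ℤ) % 2 = 1 := by obtain ⟨k, rfl⟩ := hy; omega
      by_cases hxy : ((x : ℤ) - y) % 4 = 0
      · refine ⟨(x + 3 * y) / 4, (y - x) / 4, ?_, ?_, ?_⟩
        · obtain ⟨k, hk⟩ : ∃ k, (y : ℤ) - x = 4 * k := ⟨((y : ℤ) - x) / 4, by omega⟩
          have e1 : ((x : ℤ) + 3 * y) / 4 = x + 3 * k := by omega
          have e2 : ((y : ℤ) - x) / 4 = k := by omega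
          rw [hV, e1, e2]
          have : (y : ℤ) = x + 4 * k := by omega
          rw [this] at h
          linarith
        · omega
        · omega
      · refine ⟨(x - 3 * y) / 4, (-y - x) / 4, ?_, ?_, ?_⟩
        · obtain ⟨k, hk⟩ : ∃ k, -(y : ℤ) - x = 4 * k := ⟨(-(y : ℤ) - x) / 4, by omega⟩
          have e1 : ((x : ℤ) - 3 * y) / 4 = x + 3 * k := by omega
          have e2 : (-(y : ℤ) - x) / 4 = k := by omega
          rw [hV, e1, e2]
          have : (y : ℤ) = -(x + 4 * k) := by omega
          rw [this] at h
          linarith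
        · omega
        · omega)
    (by
      intro u v u' v' h h' h1 h2
      rw [hV] at h h'
      have ho := odd_or_of_sq hM (by decide) h
      have ho' := odd_or_of_sq hM (by decide) h'
      obtain ⟨k, hk⟩ := ho
      obtain ⟨k', hk'⟩ := ho'
      omega)
  obtain ⟨k, hk⟩ := card_axes V (by intro u v; rw [hV, hV]; simp)
    (by intro u v; rw [hV, hV]; simp) hV0
  have a1 := card_axis_fst V (∃ k, M = 3 * k ^ 2)
    (by
      rintro ⟨k, hk⟩
      have : k ≠ 0 := by rintro rfl; omega
      refine ⟨k, by exact_mod_cast this, ?_⟩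
      intro u v
      rw [hV, hk, ← sq_eq_sq_iff_eq_or_eq_neg]
      push_cast
      constructor
      · rintro ⟨h, rfl⟩
        exact ⟨rfl, by linarith⟩
      · rintro ⟨rfl, h⟩
        exact ⟨by linarith, rfl⟩)
    (by
      intro h v hv
      rw [hV] at hv
      apply h
      refine ⟨v.natAbs, ?_⟩
      zify
      rw [sq_abs]; linarith)
  have a2 := card_axis_snd V (∃ k, M = k ^ 2)
    (by
      rintro ⟨k, hk⟩
      have : k ≠ 0 := by rintro rfl; omega
      refine ⟨k, by exact_mod_cast this, ?_⟩
      intro u v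
      rw [hV, hk, ← sq_eq_sq_iff_eq_or_eq_neg]
      push_cast
      constructor
      · rintro ⟨h, rfl⟩
        exact ⟨rfl, by linarith⟩
      · rintro ⟨rfl, h⟩
        exact ⟨by linarith, rfl⟩)
    (by
      intro h v hv
      rw [hV] at hv
      apply h
      refine ⟨v.natAbs, ?_⟩
      zify
      rw [sq_abs]; linarith)
  have : U.card = (if ∃ k, M = k ^ 2 then 1 else 0) + (if ∃ k, M = 3 * k ^ 2 then 1 else 0)
      + 2 * k := by
    rw [a1, a2] at hk
    split_ifs at hk ⊢ <;> omega
  rw [this]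
  push_cast
  have h2 : (2 : ZMod 2) = 0 := by decide
  rw [h2]; simp

open Classical in
theorem sev (M : ℕ) (hM : Odd M) (U : Finset (ℕ × ℕ))
    (hU : ∀ x y, (x, y) ∈ U ↔ (7 * x ^ 2 + y ^ 2 = 16 * M ∧ Odd x ∧ Odd y ∧ ¬ 3 ∣ x)) :
    (U.card : ZMod 2) = (if ∃ k, M = k ^ 2 ∧ ¬ 3 ∣ k then 1 else 0) := by
  have hM0 : 0 < M := hM.pos
  obtain ⟨V, hV⟩ := exists_finset 1 7 (by norm_num) (by norm_num) M (fun u _ => ¬ 3 ∣ u)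
  have hV0 : ((0, 0) : ℤ × ℤ) ∉ V := by
    rw [hV]; simp
  have hc := card_two_to_one' U V (fun u v => u - 3 * v) (fun u v => 3 * u + 7 * v)
    (by intros; ring) (by intros; ring)
    (by intro u v; rw [hV, hV]; intro h; rw [← h.1]; exact ⟨by ring, by omega⟩) hV0
    (by
      rintro u v h
      rw [hV] at h
      obtain ⟨h, h3⟩ := h
      rw [hU]
      have ho := odd_or_of_sq hM (by decide) h
      refine ⟨?_, ?_, ?_, ?_⟩
      · zify
        rw [sq_abs, sq_abs, ← h]; ring
      · rw [Int.natAbs_odd, show u - 3 * v = (u + v) - 2 * (2 * v) by ring]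
        exact ho.sub_even (even_two_mul _)
      · rw [Int.natAbs_odd, show 3 * u + 7 * v = (u + v) + 2 * (u + 3 * v) by ring]
        exact ho.add_even (even_two_mul _)
      · omega)
    (by intro u v u' v' _ _ h1 h2; omega)
    (by
      intro x y hxy
      rw [hU] at hxy
      obtain ⟨h, hx, hy, h3⟩ := hxy
      have key : (16 : ℤ) ∣ y - 3 * x ∨ (16 : ℤ) ∣ y + 3 * x := by
        obtain ⟨s, rfl⟩ := hx
        obtain ⟨t, rfl⟩ := hy
        obtain ⟨m, rfl⟩ := hM
        push_cast
        obtain ⟨c, hc⟩ := Int.even_mul_succ_self (s : ℤ)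
        zify at h
        have hh : ((t : ℤ) - 3 * s - 1) * (t + 3 * s + 2) = 8 * (m - 4 * c) := by nlinarith
        have h8 : (8 : ℤ) ∣ ((t : ℤ) - 3 * s - 1) * (t + 3 * s + 2) := ⟨_, hh⟩
        rcases Int.even_or_odd ((t : ℤ) - 3 * s - 1) with he | he
        · have : IsCoprime (8 : ℤ) (t + 3 * s + 2) := by
            have : Odd ((t : ℤ) + 3 * s + 2) := by
              obtain ⟨k, hk⟩ := he
              exact ⟨k + 3 * s + 1, by omega⟩
            have := (Int.isCoprime_two_left).mpr this
            have := this.pow_left (m := 3)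
            norm_num at this
            exact this
          have := this.dvd_of_dvd_mul_right h8
          left; omega
        · have : IsCoprime (8 : ℤ) (t - 3 * s - 1) := by
            have := (Int.isCoprime_two_left).mpr he
            have := this.pow_left (m := 3)
            norm_num at this
            exact this
          have := this.dvd_of_dvd_mul_left h8
          right; omega
      zify at h
      rcases key with ⟨k, hk⟩ | ⟨k, hk⟩
      · refine ⟨x + 3 * k, k, ?_, ?_, ?_⟩
        · rw [hV]
          have : (y : ℤ) = 3 * x + 16 * k := by omega
          rw [this] at h
          exact ⟨by linarith, by omega⟩
        · omega
        · omega
      · refine ⟨x - 3 * k, -k, ?_, ?_, ?_⟩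
        · rw [hV]
          have : (y : ℤ) = -3 * x + 16 * k := by omega
          rw [this] at h
          exact ⟨by linarith, by omega⟩
        · omega
        · omega)
    (by
      intro u v u' v' h h' h1 h2
      rw [hV] at h h'
      have ho := odd_or_of_sq hM (by decide) h.1
      have ho' := odd_or_of_sq hM (by decide) h'.1
      obtain ⟨k, hk⟩ := ho
      obtain ⟨k', hk'⟩ := ho'
      omega)
  obtain ⟨k, hk⟩ := card_axes V (by intro u v; rw [hV, hV]; simp)
    (by intro u v; rw [hV, hV]; simp) hV0
  have a1 := card_axis_fst V False (by simp)
    (by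
      intro h v hv
      rw [hV] at hv
      simp at hv)
  have a2 := card_axis_snd V (∃ k, M = k ^ 2 ∧ ¬ 3 ∣ k)
    (by
      rintro ⟨k, hk, h3⟩
      have : k ≠ 0 := by rintro rfl; omega
      refine ⟨k, by exact_mod_cast this, ?_⟩
      intro u v
      rw [hV, hk]
      push_cast
      constructor
      · rintro ⟨⟨h, h4⟩, rfl⟩
        refine ⟨rfl, ?_⟩
        rw [← sq_eq_sq_iff_eq_or_eq_neg]
        linarith
      · rintro ⟨rfl, h⟩
        refine ⟨⟨?_, by omega⟩, rfl⟩
        rw [← sq_eq_sq_iff_eq_or_eq_neg] at h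
        linarith)
    (by
      intro h v hv
      rw [hV] at hv
      apply h
      refine ⟨v.natAbs, ?_, by omega⟩
      zify
      rw [sq_abs]; linarith)
  have : U.card = (if ∃ k, M = k ^ 2 ∧ ¬ 3 ∣ k then 1 else 0) + 2 * k := by
    rw [a1, a2] at hk
    simp only [if_false] at hk
    split_ifs at hk ⊢ <;> omega
  rw [this]
  push_cast
  have h2 : (2 : ZMod 2) = 0 := by decide
  rw [h2]; simp

theorem fin_lemma (p : ℕ) (hp : p.Prime) (hp2 : p ≠ 2) (hp3 : p ≠ 3) (α β γ δ A B : ℤ) (hA : 0 < A)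
    (hB : 0 < B) (hB3 : 3 ∣ B)
    (e1 : 2 * α ^ 2 + 3 * γ ^ 2 = p * A) (e2 : 2 * β ^ 2 + 3 * δ ^ 2 = p * B)
    (e3 : 2 * α * β + 3 * γ * δ = 0) (e4 : α * δ - β * γ = p) (hγ : 3 ∣ γ) (hδ : ¬ 3 ∣ δ)
    (hβ : ¬ (p : ℤ) ∣ β) (N : ℕ) (hN3 : ¬ 3 ∣ N) (hpN : p ∣ N) (hpN2 : ¬ p ^ 2 ∣ N)
    (U : Finset (ℕ × ℕ))
    (hU : ∀ x y, (x, y) ∈ U ↔ (8 * x ^ 2 + 3 * y ^ 2 = N ∧ ¬ 3 ∣ y)) : Even U.card := by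
  obtain ⟨M, rfl⟩ := hpN
  have hpz : Prime (p : ℤ) := Nat.prime_iff_prime_int.mp hp
  have hp0 : (p : ℤ) ≠ 0 := hpz.ne_zero
  have np2 : ¬ (p : ℤ) ∣ 2 := by
    intro h
    exact hp2 ((Nat.prime_dvd_prime_iff_eq hp Nat.prime_two).mp (by exact_mod_cast h))
  have np3 : ¬ (p : ℤ) ∣ 3 := by
    intro h
    exact hp3 ((Nat.prime_dvd_prime_iff_eq hp Nat.prime_three).mp (by exact_mod_cast h))
  have ydvd : ∀ u v : ℤ, 3 ∣ γ * u + δ * v ↔ 3 ∣ v := by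
    intro u v
    rw [Int.dvd_add_right (hγ.mul_right u), Int.prime_three.dvd_mul]
    tauto
  obtain ⟨V, hV⟩ := exists_finset A B hA hB M (fun u v => ¬ 3 ∣ v ∧ 2 ∣ α * u + β * v)
  have hV0 : ((0, 0) : ℤ × ℤ) ∉ V := by
    rw [hV]; simp
  have nope : ∀ x y : ℤ, 8 * x ^ 2 + 3 * y ^ 2 = p * M → (p : ℤ) ∣ δ * (2 * x) - β * y →
      (p : ℤ) ∣ δ * (2 * x) + β * y → False := by
    intro x y h h1 h2
    have h3 : (p : ℤ) ∣ 2 * (β * y) := by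
      have := dvd_sub h2 h1
      rwa [show δ * (2 * x) + β * y - (δ * (2 * x) - β * y) = 2 * (β * y) by ring] at this
    have h4 : (p : ℤ) ∣ y := by
      rcases hpz.dvd_or_dvd h3 with h | h
      · exact absurd h np2
      · rcases hpz.dvd_or_dvd h with h | h
        · exact absurd h hβ
        · exact h
    obtain ⟨y', rfl⟩ := h4
    have h5 : (p : ℤ) ∣ 2 ^ 3 * x ^ 2 := ⟨M - 3 * p * y' ^ 2, by linarith⟩
    have h6 : (p : ℤ) ∣ x := by
      rcases hpz.dvd_or_dvd h5 with h | h
      · exact absurd (hpz.dvd_of_dvd_pow h) np2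
      · exact hpz.dvd_of_dvd_pow h
    obtain ⟨x', rfl⟩ := h6
    apply hpN2
    have : (p : ℤ) ^ 2 ∣ p * M := ⟨8 * x' ^ 2 + 3 * y' ^ 2, by rw [← h]; ring⟩
    exact_mod_cast this
  have form : ∀ u v x : ℤ, A * u ^ 2 + B * v ^ 2 = M → α * u + β * v = 2 * x →
      8 * x ^ 2 + 3 * (γ * u + δ * v) ^ 2 = p * M := by
    intro u v x h hx
    rw [← h]
    have : 8 * x ^ 2 = 2 * (α * u + β * v) ^ 2 := by rw [hx]; ring
    rw [this]
    linear_combination u ^ 2 * e1 + v ^ 2 * e2 + 2 * u * v * e3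
  have back : ∀ x y : ℤ, 8 * x ^ 2 + 3 * y ^ 2 = p * M → ¬ 3 ∣ y → (p : ℤ) ∣ δ * (2 * x) - β * y →
      ∃ u v, (u, v) ∈ V ∧ (α * u + β * v) / 2 = x ∧ γ * u + δ * v = y := by
    intro x y h h3 hd
    have hd2 : (p : ℤ) ∣ α * y - γ * (2 * x) := by
      have : (p : ℤ) ∣ β * (α * y - γ * (2 * x)) := by
        have : β * (α * y - γ * (2 * x)) = p * (2 * x) - α * (δ * (2 * x) - β * y) := by
          rw [← e4]; ring
        rw [this]
        exact dvd_sub (dvd_mul_right _ _) (hd.mul_left _)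
      exact (hpz.dvd_or_dvd this).resolve_left hβ
    obtain ⟨u, hu⟩ := hd
    obtain ⟨v, hv⟩ := hd2
    have f1 : α * u + β * v = 2 * x := by
      apply mul_left_cancel₀ hp0
      linear_combination -α * hu - β * hv + 2 * x * e4
    have f2 : γ * u + δ * v = y := by
      apply mul_left_cancel₀ hp0
      linear_combination -γ * hu - δ * hv + y * e4
    refine ⟨u, v, ?_, by omega, f2⟩
    rw [hV]
    refine ⟨?_, ?_, ⟨x, f1⟩⟩
    · apply mul_left_cancel₀ hp0
      rw [← h]
      have : 8 * x ^ 2 = 2 * (α * u + β * v) ^ 2 := by rw [f1]; ring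
      rw [this, ← f2]
      linear_combination - u ^ 2 * e1 - v ^ 2 * e2 - 2 * u * v * e3
    · rw [← ydvd u v, f2]; exact h3
  have half : ∀ u v, (u, v) ∈ V → ∃ x, α * u + β * v = 2 * x ∧ (α * u + β * v) / 2 = x := by
    intro u v h
    rw [hV] at h
    obtain ⟨x, hx⟩ := h.2.2
    exact ⟨x, hx, by omega⟩
  have sol : ∀ u v x y : ℤ, α * u + β * v = 2 * x → γ * u + δ * v = y →
      (p : ℤ) * u = δ * (2 * x) - β * y ∧ (p : ℤ) * v = α * y - γ * (2 * x) := by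
    intro u v x y h1 h2
    rw [← h1, ← h2, ← e4]
    constructor <;> ring
  have hc := card_two_to_one' U V (fun u v => (α * u + β * v) / 2) (fun u v => γ * u + δ * v)
    (by
      intro u v h
      obtain ⟨x, hx, hx2⟩ := half u v h
      rw [hx2, show α * -u + β * -v = -(α * u + β * v) by ring, hx]
      omega)
    (by intros; ring)
    (by
      intro u v; rw [hV, hV]; intro h
      refine ⟨by rw [← h.1]; ring, by omega, ?_⟩
      rw [show α * -u + β * -v = -(α * u + β * v) by ring]
      exact (dvd_neg).mpr h.2.2) hV0
    (by
      intro u v h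
      obtain ⟨x, hx, hx2⟩ := half u v h
      rw [hx2, hU]
      rw [hV] at h
      have := form u v x h.1 hx
      constructor
      · zify
        rw [sq_abs, sq_abs]; exact this
      · have := (ydvd u v).not.mpr h.2.1
        omega)
    (by
      intro u v u' v' h h' h1 h2
      obtain ⟨x, hx, hx2⟩ := half u v h
      obtain ⟨x', hx', hx2'⟩ := half u' v' h'
      have q1 := sol _ _ _ _ hx rfl
      have q2 := sol _ _ _ _ hx' rfl
      simp only [hx2, hx2'] at h1
      subst h1
      rw [h2] at q1
      exact ⟨mul_left_cancel₀ hp0 (q1.1.trans q2.1.symm), mul_left_cancel₀ hp0 (q1.2.trans q2.2.symm)⟩)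
    (by
      intro x y hxy
      rw [hU] at hxy
      obtain ⟨h, h3⟩ := hxy
      zify at h
      have hd : (p : ℤ) ∣ 3 * ((δ * (2 * x) - β * y) * (δ * (2 * x) + β * y)) := by
        have : 3 * ((δ * (2 * x) - β * y) * (δ * (2 * x) + β * y))
          = p * (4 * B * x ^ 2 - β ^ 2 * M) := by
          linear_combination 4 * (x : ℤ) ^ 2 * e2 - β ^ 2 * h
        exact ⟨_, this⟩
      rcases hpz.dvd_or_dvd ((hpz.dvd_or_dvd hd).resolve_left np3) with hd | hd
      · obtain ⟨u, v, h1, h2, h4⟩ := back x y h (by omega) hd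
        exact ⟨u, v, h1, h2, Or.inl h4⟩
      · obtain ⟨u, v, h1, h2, h4⟩ := back x (-y) (by rw [← h]; ring) (by omega)
          (by rw [mul_neg, sub_neg_eq_add]; exact hd)
        exact ⟨u, v, h1, h2, Or.inr h4⟩)
    (by
      intro u v u' v' h h' h1 h2
      obtain ⟨x, hx, hx2⟩ := half u v h
      obtain ⟨x', hx', hx2'⟩ := half u' v' h'
      have q1 := sol _ _ _ _ hx rfl
      have q2 := sol _ _ _ _ hx' rfl
      simp only [hx2, hx2'] at h1
      subst h1
      rw [hV] at h
      refine nope _ _ (form u v x h.1 hx) ⟨u, q1.1.symm⟩ ⟨u', ?_⟩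
      rw [q2.1, h2]; ring)
  have h3 := card_four V
    (by
      rintro ⟨u, v⟩ h
      rw [hV] at h ⊢
      refine ⟨by rw [← h.1]; ring, h.2.1, ?_⟩
      rw [show α * -u + β * v = (α * u + β * v) - 2 * (α * u) by ring]
      exact dvd_sub h.2.2 (dvd_mul_right _ _))
    (by
      rintro ⟨u, v⟩ h
      rw [hV] at h ⊢
      refine ⟨by rw [← h.1]; ring, by omega, ?_⟩
      rw [show α * u + β * -v = (α * u + β * v) - 2 * (β * v) by ring]
      exact dvd_sub h.2.2 (dvd_mul_right _ _))
    (by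
      rintro ⟨u, v⟩ h
      rw [hV] at h
      refine ⟨?_, ?_⟩
      · rintro (rfl : u = 0)
        apply hN3
        obtain ⟨B', rfl⟩ := hB3
        have : (3 : ℤ) ∣ p * M := ⟨p * (B' * v ^ 2), by rw [← h.1]; ring⟩
        exact_mod_cast this
      · rintro (rfl : v = 0)
        simp at h)
  rw [even_iff_two_dvd]
  omega

open PowerSeries

open Classical in
noncomputable def th (c : ℕ) (C : ℕ → Prop) : PowerSeries (ZMod 2) :=
  PowerSeries.mk fun n => if ∃ x, C x ∧ x ^ 2 = c * n + 1 then 1 else 0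

open Classical in
theorem coeff_expand_th (c : ℕ) (hc : 0 < c) (C : ℕ → Prop) (hC : ∀ x, C x → ∃ n, x ^ 2 = c * n + 1)
    (k : ℕ) (hk : k ≠ 0) (i : ℕ) :
    (PowerSeries.expand k hk (th c C)).coeff i =
      if ∃ x, C x ∧ k * x ^ 2 = c * i + k then 1 else 0 := by
  rw [PowerSeries.coeff_expand]
  split_ifs with h1 h2 h2
  · obtain ⟨n, rfl⟩ := h1
    obtain ⟨x, hx, h⟩ := h2
    rw [Nat.mul_div_cancel_left _ (Nat.pos_of_ne_zero hk), th, coeff_mk, if_pos]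
    refine ⟨x, hx, ?_⟩
    apply Nat.eq_of_mul_eq_mul_left (Nat.pos_of_ne_zero hk)
    rw [h]; ring
  · obtain ⟨n, rfl⟩ := h1
    rw [Nat.mul_div_cancel_left _ (Nat.pos_of_ne_zero hk), th, coeff_mk, if_neg]
    rintro ⟨x, hx, h⟩
    exact h2 ⟨x, hx, by rw [h]; ring⟩
  · exfalso
    obtain ⟨x, hx, h⟩ := h2
    obtain ⟨n, hn⟩ := hC x hx
    apply h1
    refine ⟨n, ?_⟩
    rw [hn] at h
    apply Nat.eq_of_mul_eq_mul_left hc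
    linarith
  · rfl

open Classical in
theorem coeff_mul_ind (φ ψ : PowerSeries (ZMod 2)) (R S : ℕ → ℕ → Prop)
    (hφ : ∀ i, φ.coeff i = if ∃ x, R x i then 1 else 0)
    (hψ : ∀ i, ψ.coeff i = if ∃ x, S x i then 1 else 0)
    (R1 : ∀ x x' i, R x i → R x' i → x = x') (R2 : ∀ x i i', R x i → R x i' → i = i')
    (S1 : ∀ x x' i, S x i → S x' i → x = x') (S2 : ∀ x i i', S x i → S x i' → i = i')
    (n : ℕ) (U : Finset (ℕ × ℕ))
    (hU : ∀ x y, (x, y) ∈ U ↔ ∃ i j, i + j = n ∧ R x i ∧ S y j) :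
    (φ * ψ).coeff n = (U.card : ZMod 2) := by
  rw [coeff_mul]
  have : ∀ t ∈ Finset.HasAntidiagonal.antidiagonal n, φ.coeff t.1 * ψ.coeff t.2 =
      if (∃ x, R x t.1) ∧ (∃ y, S y t.2) then 1 else 0 := by
    intro t _
    rw [hφ, hψ]
    by_cases h1 : ∃ x, R x t.1 <;> by_cases h2 : ∃ x, S x t.2 <;> simp [h1, h2]
  rw [Finset.sum_congr rfl this, Finset.sum_boole]
  congr 1
  symm
  have ex : ∀ t ∈ U, ∃ s : ℕ × ℕ, s.1 + s.2 = n ∧ R t.1 s.1 ∧ S t.2 s.2 := by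
    rintro ⟨x, y⟩ h
    obtain ⟨i, j, h⟩ := (hU x y).mp h
    exact ⟨(i, j), h⟩
  choose! g hg using ex
  apply Finset.card_bij (fun t _ => g t)
  · intro t ht
    obtain ⟨h1, h2, h3⟩ := hg t ht
    simp only [Finset.mem_filter, Finset.HasAntidiagonal.mem_antidiagonal]
    exact ⟨h1, ⟨_, h2⟩, ⟨_, h3⟩⟩
  · intro a ha b hb hab
    obtain ⟨h1, h2, h3⟩ := hg a ha
    obtain ⟨h1', h2', h3'⟩ := hg b hb
    rw [← hab] at h2' h3'
    exact Prod.ext (R1 _ _ _ h2 h2') (S1 _ _ _ h3 h3')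
  · rintro ⟨i, j⟩ h
    simp only [Finset.mem_filter, Finset.HasAntidiagonal.mem_antidiagonal] at h
    obtain ⟨h1, ⟨x, hx⟩, ⟨y, hy⟩⟩ := h
    have hm : (x, y) ∈ U := (hU x y).mpr ⟨i, j, h1, hx, hy⟩
    refine ⟨(x, y), hm, ?_⟩
    obtain ⟨h1, h2, h3⟩ := hg _ hm
    exact Prod.ext (R2 _ _ _ h2 hx) (S2 _ _ _ h3 hy)

theorem coeff_mul_th (c d k l : ℕ) (hc : 0 < c) (hd : 0 < d) (hk : k ≠ 0) (hl : l ≠ 0)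
    (C D : ℕ → Prop) (hC : ∀ x, C x → ∃ n, x ^ 2 = c * n + 1)
    (hD : ∀ x, D x → ∃ n, x ^ 2 = d * n + 1) (n : ℕ) (U : Finset (ℕ × ℕ))
    (hU : ∀ x y, (x, y) ∈ U ↔ ∃ i j, i + j = n ∧ (C x ∧ k * x ^ 2 = c * i + k) ∧
      (D y ∧ l * y ^ 2 = d * j + l)) :
    (PowerSeries.expand k hk (th c C) * PowerSeries.expand l hl (th d D)).coeff n
      = (U.card : ZMod 2) := by
  have aux1 : ∀ k c : ℕ, k ≠ 0 → ∀ x x' i : ℕ, k * x ^ 2 = c * i + k → k * x' ^ 2 = c * i + k →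
      x = x' := by
    intro k c hk x x' i h h'
    have := Nat.eq_of_mul_eq_mul_left (Nat.pos_of_ne_zero hk) (h.trans h'.symm)
    exact Nat.pow_left_injective two_ne_zero this
  have aux2 : ∀ k c : ℕ, 0 < c → ∀ x i i' : ℕ, k * x ^ 2 = c * i + k → k * x ^ 2 = c * i' + k →
      i = i' := by
    intro k c hc x i i' h h'
    apply Nat.eq_of_mul_eq_mul_left hc
    omega
  exact coeff_mul_ind _ _ (fun x i => C x ∧ k * x ^ 2 = c * i + k)
    (fun x i => D x ∧ l * x ^ 2 = d * i + l)
    (coeff_expand_th c hc C hC k hk) (coeff_expand_th d hd D hD l hl)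
    (fun x x' i h h' => aux1 k c hk x x' i h.2 h'.2) (fun x i i' h h' => aux2 k c hc x i i' h.2 h'.2)
    (fun x x' i h h' => aux1 l d hl x x' i h.2 h'.2) (fun x i i' h h' => aux2 l d hd x i i' h.2 h'.2)
    n U hU

def C6 (x : ℕ) : Prop := Odd x ∧ ¬ 3 ∣ x
def C3 (x : ℕ) : Prop := ¬ 3 ∣ x

theorem odd_sq8 (x : ℕ) (h : Odd x) : ∃ n, x ^ 2 = 8 * n + 1 := by
  obtain ⟨k, rfl⟩ := h
  obtain ⟨c, hc⟩ := Nat.even_mul_succ_self k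
  exact ⟨c, by nlinarith⟩

theorem C3_sq (x : ℕ) (h : C3 x) : ∃ n, x ^ 2 = 3 * n + 1 := by
  unfold C3 at h
  obtain ⟨k, hk | hk⟩ : ∃ k, x = 3 * k + 1 ∨ x = 3 * k + 2 := ⟨x / 3, by omega⟩
  · exact ⟨3 * k ^ 2 + 2 * k, by rw [hk]; ring⟩
  · exact ⟨3 * k ^ 2 + 4 * k + 1, by rw [hk]; ring⟩

theorem C6_sq (x : ℕ) (h : C6 x) : ∃ n, x ^ 2 = 24 * n + 1 := by
  obtain ⟨a, ha⟩ := odd_sq8 x h.1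
  obtain ⟨b, hb⟩ := C3_sq x h.2
  exact ⟨x ^ 2 / 24, by omega⟩

theorem odd_of_sq {x m : ℕ} (h : x ^ 2 = m) (hm : Odd m) : Odd x := by
  rw [← h] at hm
  exact (Nat.odd_pow_iff two_ne_zero).mp hm

theorem C3_of_sq {x m : ℕ} (h : x ^ 2 = m) (hm : ¬ 3 ∣ m) : C3 x := by
  intro h3
  apply hm
  rw [← h]
  exact dvd_pow h3 two_ne_zero

noncomputable abbrev fS : PowerSeries (ZMod 2) := th 24 C6
noncomputable abbrev tS : PowerSeries (ZMod 2) := th 8 Odd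
noncomputable abbrev pS : PowerSeries (ZMod 2) := th 3 C3

theorem pent_eq : pentagonalSeries (ZMod 2) = fS := by
  classical
  ext n
  rw [fS, th, coeff_mk]
  split_ifs with h
  · obtain ⟨x, ⟨hx, h3⟩, h⟩ := h
    obtain ⟨k, hk⟩ : ∃ k : ℤ, pentagonal k = n := by
      obtain ⟨j, hj | hj⟩ : ∃ j : ℤ, (x : ℤ) = 6 * j + 1 ∨ (x : ℤ) = 6 * j - 1 := by
        obtain ⟨t, rfl⟩ := hx
        exact ⟨(2 * t + 1 + 1) / 6, by push_cast; omega⟩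
      · refine ⟨-j, ?_⟩
        have := two_mul_natCast_pentagonal_neg j
        zify at h ⊢
        rw [hj] at h
        linarith
      · refine ⟨j, ?_⟩
        have := two_mul_natCast_pentagonal j
        zify at h ⊢
        rw [hj] at h
        linarith
    rw [← hk, coeff_pentagonalSeries_pentagonal]
    rcases Int.even_or_odd k with h | h
    · simp [Int.negOnePow_even k h]
    · simp [Int.negOnePow_odd k h]
  · apply coeff_pentagonalSeries_eq_zero
    rintro ⟨k, hk⟩
    apply h
    have := two_mul_natCast_pentagonal k
    rw [hk] at this
    have h2 : (6 * k - 1).natAbs ^ 2 = 24 * n + 1 := by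
      zify
      rw [sq_abs]; linarith
    refine ⟨(6 * k - 1).natAbs, ⟨?_, ?_⟩, h2⟩
    · exact odd_of_sq h2 ⟨12 * n, by ring⟩
    · exact C3_of_sq h2 (by omega)

theorem expand_two_pow (φ : PowerSeries (ZMod 2)) :
    PowerSeries.expand 2 two_ne_zero φ = φ ^ 2 := by
  have h := MvPowerSeries.map_frobenius_expand (σ := Unit) (R := ZMod 2) 2 two_ne_zero (f := φ)
  rw [← h]
  have : frobenius (ZMod 2) 2 = RingHom.id _ := ZMod.frobenius_zmod 2
  rw [this]
  simp
  rfl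

theorem expand_four_pow (φ : PowerSeries (ZMod 2)) :
    PowerSeries.expand 4 four_ne_zero φ = φ ^ 4 := by
  rw [show φ ^ 4 = (φ ^ 2) ^ 2 by ring, ← expand_two_pow, ← expand_two_pow,
    ← PowerSeries.expand_mul]

open PowerSeries.WithPiTopology in
theorem gen_fun : PowerSeries.mk (fun n => (b21 n : ZMod 2)) * fS =
    PowerSeries.expand 21 (by norm_num) fS := by
  let _ : TopologicalSpace (ZMod 2) := ⊥
  have _ : DiscreteTopology (ZMod 2) := ⟨rfl⟩
  have h1 : HasProd (fun n ↦ (1 - X ^ (n + 1) : (ZMod 2)⟦X⟧)) fS := by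
    rw [← pent_eq]
    exact hasProd_one_sub_X_pow (ZMod 2)
  have h2 := Nat.Partition.hasProd_powerSeriesMk_card_countRestricted (ZMod 2) (m := 21) (by norm_num)
  have h3 := h2.mul h1
  have e : ∀ n : ℕ, (Nat.Partition.countRestricted n 21).card = b21 n := by
    intro n
    rw [← Nat.Partition.card_restricted_eq_card_countRestricted n (by norm_num)]
    rfl
  simp only [e] at h3
  have hcont : Continuous (PowerSeries.expand 21 (by norm_num) : (ZMod 2)⟦X⟧ →ₐ[ZMod 2] (ZMod 2)⟦X⟧) := by
    rw [continuous_iff_continuousAt]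
    intro φ
    rw [ContinuousAt, tendsto_iff_coeff_tendsto]
    intro d
    simp only [coeff_expand]
    split_ifs
    · exact (continuous_coeff (ZMod 2) _).tendsto φ
    · exact tendsto_const_nhds
  have h4 := h1.map (PowerSeries.expand 21 (by norm_num) : (ZMod 2)⟦X⟧ →ₐ[ZMod 2] (ZMod 2)⟦X⟧) hcont
  refine h3.unique ?_
  have h5 : (fun b : ℕ => (∑ j ∈ Finset.range 21, (X : (ZMod 2)⟦X⟧) ^ ((b + 1) * j)) *
      (1 - X ^ (b + 1))) = (PowerSeries.expand 21 (by norm_num) : (ZMod 2)⟦X⟧ →ₐ[ZMod 2] (ZMod 2)⟦X⟧)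
        ∘ fun n => 1 - X ^ (n + 1) := by
    ext1 n
    simp only [Function.comp, map_sub, map_one, map_pow, expand_X]
    have := geom_sum_mul_neg (X ^ (n + 1) : (ZMod 2)⟦X⟧) 21
    simp only [← pow_mul] at this ⊢
    rw [this, mul_comm 21]
  rw [h5]
  exact h4
open PowerSeries

theorem id1 : fS * tS = PowerSeries.expand 4 four_ne_zero fS := by
  classical
  ext n
  obtain ⟨U, hU⟩ := exists_finset_nat 1 3 (by norm_num) (by norm_num) (4 * (6 * n + 1))
    (fun x y => Odd x ∧ Odd y)
  have h1 := coeff_mul_th 24 8 1 1 (by norm_num) (by norm_num) one_ne_zero one_ne_zero C6 Odd C6_sq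
    odd_sq8 n U (by
      intro x y
      rw [hU]
      constructor
      · rintro ⟨h, hx, hy⟩
        obtain ⟨j, hj⟩ := odd_sq8 y hy
        have hx3 : C6 x := ⟨hx, C3_of_sq (rfl : x ^ 2 = x ^ 2) (by omega)⟩
        obtain ⟨i, hi⟩ := C6_sq x hx3
        exact ⟨i, j, by omega, ⟨hx3, by omega⟩, hy, by omega⟩
      · rintro ⟨i, j, h, ⟨hx, hi⟩, hy, hj⟩
        exact ⟨by omega, hx.1, hy⟩)
  rw [expand_one_apply, expand_one_apply] at h1
  rw [h1, eis (6 * n + 1) ⟨3 * n, by ring⟩ U (by intro x y; rw [hU, one_mul]),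
    coeff_expand_th 24 (by norm_num) C6 C6_sq,
    if_neg (c := ∃ k, 6 * n + 1 = 3 * k ^ 2) (by rintro ⟨k, hk⟩; omega), add_zero]
  congr 1
  rw [eq_iff_iff]
  constructor
  · rintro ⟨k, hk⟩
    exact ⟨k, ⟨odd_of_sq hk.symm ⟨3 * n, by ring⟩, C3_of_sq hk.symm (by omega)⟩, by omega⟩
  · rintro ⟨k, -, hk⟩
    exact ⟨k, by omega⟩

theorem id2 : tS * PowerSeries.expand 3 three_ne_zero tS =
    PowerSeries.expand 4 four_ne_zero tS + X * PowerSeries.expand 12 (by norm_num) tS := by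
  classical
  ext n
  obtain ⟨U, hU⟩ := exists_finset_nat 1 3 (by norm_num) (by norm_num) (4 * (2 * n + 1))
    (fun x y => Odd x ∧ Odd y)
  have h1 := coeff_mul_th 8 8 1 3 (by norm_num) (by norm_num) one_ne_zero three_ne_zero Odd Odd odd_sq8
    odd_sq8 n U (by
      intro x y
      rw [hU]
      constructor
      · rintro ⟨h, hx, hy⟩
        obtain ⟨j, hj⟩ := odd_sq8 y hy
        obtain ⟨i, hi⟩ := odd_sq8 x hx
        exact ⟨i, 3 * j, by omega, ⟨hx, by omega⟩, hy, by omega⟩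
      · rintro ⟨i, j, h, ⟨hx, hi⟩, hy, hj⟩
        exact ⟨by omega, hx, hy⟩)
  rw [expand_one_apply] at h1
  rw [h1, eis (2 * n + 1) ⟨n, by ring⟩ U (by intro x y; rw [hU, one_mul]), map_add,
    coeff_expand_th 8 (by norm_num) Odd odd_sq8]
  congr 1
  · congr 1
    rw [eq_iff_iff]
    constructor
    · rintro ⟨k, hk⟩
      exact ⟨k, odd_of_sq hk.symm ⟨n, by ring⟩, by omega⟩
    · rintro ⟨k, -, hk⟩
      exact ⟨k, by omega⟩
  · cases n with
    | zero =>
      rw [if_neg (by rintro ⟨k, hk⟩; omega)]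
      simp
    | succ n =>
      rw [coeff_succ_X_mul, coeff_expand_th 8 (by norm_num) Odd odd_sq8]
      congr 1
      rw [eq_iff_iff]
      constructor
      · rintro ⟨k, hk⟩
        refine ⟨k, ?_, by omega⟩
        have : Odd (3 * k ^ 2) := ⟨n + 1, by omega⟩
        rw [Nat.odd_mul] at this
        exact odd_of_sq rfl this.2
      · rintro ⟨k, -, hk⟩
        exact ⟨k, by omega⟩

theorem id3 (n : ℕ) : (PowerSeries.expand 21 (by norm_num) fS * tS).coeff (4 * n + 1) =
    (PowerSeries.expand 12 (by norm_num) fS).coeff n := by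
  classical
  obtain ⟨U, hU⟩ := exists_finset_nat 7 1 (by norm_num) (by norm_num) (16 * (2 * n + 1))
    (fun x y => Odd x ∧ Odd y ∧ ¬ 3 ∣ x)
  have h1 := coeff_mul_th 24 8 21 1 (by norm_num) (by norm_num) (by norm_num) one_ne_zero C6 Odd C6_sq
    odd_sq8 (4 * n + 1) U (by
      intro x y
      rw [hU]
      constructor
      · rintro ⟨h, hx, hy, h3⟩
        obtain ⟨j, hj⟩ := odd_sq8 y hy
        have hx3 : C6 x := ⟨hx, h3⟩
        obtain ⟨i, hi⟩ := C6_sq x hx3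
        exact ⟨21 * i, j, by omega, ⟨hx3, by omega⟩, hy, by omega⟩
      · rintro ⟨i, j, h, ⟨hx, hi⟩, hy, hj⟩
        exact ⟨by omega, hx.1, hy, hx.2⟩)
  rw [expand_one_apply] at h1
  rw [h1, sev (2 * n + 1) ⟨n, by ring⟩ U (by intro x y; rw [hU, one_mul]),
    coeff_expand_th 24 (by norm_num) C6 C6_sq]
  congr 1
  rw [eq_iff_iff]
  constructor
  · rintro ⟨k, hk, h3⟩
    exact ⟨k, ⟨odd_of_sq hk.symm ⟨n, by ring⟩, h3⟩, by omega⟩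
  · rintro ⟨k, h, hk⟩
    exact ⟨k, by omega, h.2⟩

theorem id7 (m : ℕ) (U : Finset (ℕ × ℕ))
    (hU : ∀ x y, (x, y) ∈ U ↔ (8 * x ^ 2 + 3 * y ^ 2 = 24 * m + 11 ∧ ¬ 3 ∣ y)) :
    (pS * PowerSeries.expand 3 three_ne_zero fS).coeff m = (U.card : ZMod 2) := by
  have h1 := coeff_mul_th 3 24 1 3 (by norm_num) (by norm_num) one_ne_zero three_ne_zero C3 C6 C3_sq
    C6_sq m U (by
      intro x y
      rw [hU]
      constructor
      · rintro ⟨h, h3⟩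
        have hy : C6 y := by
          refine ⟨?_, h3⟩
          have : Odd (3 * y ^ 2) := Nat.odd_iff.mpr (by omega)
          rw [Nat.odd_mul] at this
          exact odd_of_sq rfl this.2
        have hx : C3 x := C3_of_sq (rfl : x ^ 2 = x ^ 2) (by omega)
        obtain ⟨i, hi⟩ := C3_sq x hx
        obtain ⟨j, hj⟩ := C6_sq y hy
        exact ⟨i, 3 * j, by omega, ⟨hx, by omega⟩, hy, by omega⟩
      · rintro ⟨i, j, h, ⟨hx, hi⟩, hy, hj⟩
        exact ⟨by omega, hy.2⟩)
  rw [expand_one_apply] at h1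
  exact h1

theorem id6 : pS = PowerSeries.expand 8 (by norm_num) fS + X * PowerSeries.expand 4 four_ne_zero pS := by
  classical
  ext n
  rw [map_add, coeff_expand_th 24 (by norm_num) C6 C6_sq]
  have h2 : (X * PowerSeries.expand 4 four_ne_zero pS).coeff n =
      if ∃ x, C3 x ∧ 4 * x ^ 2 = 3 * n + 1 then 1 else 0 := by
    cases n with
    | zero => rw [if_neg (by rintro ⟨k, -, hk⟩; omega)]; simp
    | succ n =>
      rw [coeff_succ_X_mul, coeff_expand_th 3 (by norm_num) C3 C3_sq]
      rfl
  rw [h2, pS, th, coeff_mk]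
  rcases Nat.even_or_odd (3 * n + 1) with ho | ho
  · rw [if_neg (c := ∃ x, C6 x ∧ 8 * x ^ 2 = 24 * n + 8), zero_add]
    · congr 1
      rw [eq_iff_iff]
      constructor
      · rintro ⟨x, hx, h⟩
        rw [← h, Nat.even_pow] at ho
        obtain ⟨t, rfl⟩ := ho.1
        refine ⟨t, ?_, by rw [← h]; ring⟩
        unfold C3 at *
        omega
      · rintro ⟨x, hx, h⟩
        refine ⟨2 * x, ?_, by rw [← h]; ring⟩
        unfold C3 at *
        omega
    · rintro ⟨x, hx, h⟩
      have : Odd (x ^ 2) := hx.1.pow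
      rw [show x ^ 2 = 3 * n + 1 by omega] at this
      exact (Nat.not_even_iff_odd.mpr this) ho
  · rw [if_neg (c := ∃ x, C3 x ∧ 4 * x ^ 2 = 3 * n + 1), add_zero]
    · congr 1
      rw [eq_iff_iff]
      constructor
      · rintro ⟨x, hx, h⟩
        exact ⟨x, ⟨odd_of_sq h ho, hx⟩, by omega⟩
      · rintro ⟨x, hx, h⟩
        exact ⟨x, hx.2, by omega⟩
    · rintro ⟨x, hx, h⟩
      obtain ⟨t, ht⟩ := ho
      omega

theorem fS_ne : fS ≠ 0 := by
  classical
  intro h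
  have := congrArg (PowerSeries.coeff 0) h
  rw [fS, th, coeff_mk, if_pos ⟨1, by unfold C6; decide, by norm_num⟩] at this
  simp at this

theorem tS_eq : tS = fS ^ 3 := by
  have h := id1
  rw [expand_four_pow] at h
  apply mul_left_cancel₀ fS_ne
  rw [h]; ring

theorem rec_zero (D : PowerSeries (ZMod 2)) (h : D = X * PowerSeries.expand 4 four_ne_zero D) :
    D = 0 := by
  ext n
  induction n using Nat.strong_induction_on with
  | _ n ih =>
    rw [h]
    cases n with
    | zero => simp
    | succ n =>
      rw [coeff_succ_X_mul, coeff_expand]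
      split_ifs
      · rw [ih (n / 4) (by omega)]; simp
      · simp

theorem ex_mul (a b : ℕ) (ha : a ≠ 0) (hb : b ≠ 0) (φ : PowerSeries (ZMod 2)) (c : ℕ) (hc : c ≠ 0)
    (h : c = a * b) : PowerSeries.expand a ha (PowerSeries.expand b hb φ) =
      PowerSeries.expand c hc φ := by
  subst h
  rw [PowerSeries.expand_mul]

theorem pS_mul : pS * fS = PowerSeries.expand 3 three_ne_zero tS := by
  have hu : IsUnit fS := by
    classical
    rw [PowerSeries.isUnit_iff_constantCoeff, ← coeff_zero_eq_constantCoeff_apply, fS, th, coeff_mk,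
      if_pos ⟨1, by unfold C6; decide, by norm_num⟩]
    exact isUnit_one
  obtain ⟨w, hw⟩ := hu.exists_right_inv
  set G := PowerSeries.expand 3 three_ne_zero tS * w with hG
  have hGf : G * fS = PowerSeries.expand 3 three_ne_zero tS := by
    rw [hG, mul_assoc, mul_comm w, hw, mul_one]
  have hrec : G = PowerSeries.expand 8 (by norm_num) fS + X * PowerSeries.expand 4 four_ne_zero G := by
    apply mul_right_cancel₀ (b := PowerSeries.expand 4 four_ne_zero fS)
    · rw [expand_four_pow]; exact pow_ne_zero _ fS_ne
    · have e1 : G * PowerSeries.expand 4 four_ne_zero fS = tS * PowerSeries.expand 3 three_ne_zero tS := by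
        rw [← hGf, expand_four_pow, tS_eq]; ring
      have e2 : PowerSeries.expand 8 (by norm_num) fS * PowerSeries.expand 4 four_ne_zero fS
          = PowerSeries.expand 4 four_ne_zero tS := by
        rw [← ex_mul 4 2 four_ne_zero two_ne_zero fS 8 (by norm_num) rfl, expand_two_pow, tS_eq,
          ← map_mul]
        congr 1
      have e3 : PowerSeries.expand 4 four_ne_zero G * PowerSeries.expand 4 four_ne_zero fS
          = PowerSeries.expand 12 (by norm_num) tS := by
        rw [← map_mul, hGf, ex_mul]
        rfl
      rw [e1, id2, add_mul, e2, mul_assoc, e3]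
  have hD := rec_zero (pS - G) (by
    conv_lhs => rw [id6, hrec]
    rw [map_sub]; ring)
  rw [sub_eq_zero.mp hD, hGf]

theorem section_mul (φ ψ : PowerSeries (ZMod 2)) (n : ℕ) :
    (φ * PowerSeries.expand 4 four_ne_zero ψ).coeff (4 * n + 1) =
      ((PowerSeries.mk fun m => φ.coeff (4 * m + 1)) * ψ).coeff n := by
  rw [coeff_mul, coeff_mul]
  symm
  apply Finset.sum_of_injOn (fun t => (4 * t.1 + 1, 4 * t.2))
  · rintro ⟨a, b⟩ _ ⟨a', b'⟩ _ h
    simp only [Prod.mk.injEq] at h ⊢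
    omega
  · rintro ⟨a, b⟩ h
    simp only [SetLike.mem_coe, Finset.HasAntidiagonal.mem_antidiagonal] at h ⊢
    omega
  · rintro ⟨a, b⟩ h h2
    simp only [Finset.HasAntidiagonal.mem_antidiagonal] at h
    rw [coeff_expand]
    split_ifs with hb
    · exfalso
      apply h2
      obtain ⟨c, rfl⟩ := hb
      refine ⟨(n - c, c), ?_, ?_⟩
      · simp only [SetLike.mem_coe, Finset.HasAntidiagonal.mem_antidiagonal]; omega
      · show (4 * (n - c) + 1, 4 * c) = (a, 4 * c)
        congr 1; omega
    · simp
  · rintro ⟨a, b⟩ h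
    simp only [coeff_mk, coeff_expand_mul]

theorem main_parity (m : ℕ) (U : Finset (ℕ × ℕ))
    (hU : ∀ x y, (x, y) ∈ U ↔ (8 * x ^ 2 + 3 * y ^ 2 = 24 * m + 11 ∧ ¬ 3 ∣ y)) :
    (b21 (4 * m + 1) : ZMod 2) = (U.card : ZMod 2) := by
  rw [← id7 m U hU]
  set P := PowerSeries.mk (fun n => (b21 n : ZMod 2)) with hP
  have h1 : P * PowerSeries.expand 4 four_ne_zero fS =
      PowerSeries.expand 21 (by norm_num) fS * tS := by
    rw [expand_four_pow, tS_eq, ← gen_fun]; ring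
  have h2 : (PowerSeries.mk fun m => P.coeff (4 * m + 1)) * fS =
      PowerSeries.expand 12 (by norm_num) fS := by
    ext n
    rw [← section_mul, h1, id3]
  have h3 : PowerSeries.expand 12 (by norm_num) fS =
      (pS * PowerSeries.expand 3 three_ne_zero fS) * fS := by
    rw [mul_right_comm, pS_mul, tS_eq, ← map_mul,
      ← ex_mul 3 4 three_ne_zero four_ne_zero fS 12 (by norm_num) rfl, expand_four_pow]
    congr 1
  rw [h3] at h2
  have h4 := mul_right_cancel₀ fS_ne h2
  rw [← h4, coeff_mk, hP, coeff_mk]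

theorem sol_form (p : ℕ) (hsol : ∃ j ∈ ({1, 4, 8} : Set ℤ), ∃ x y : ℤ,
      8 * x ^ 2 + 27 * y ^ 2 = j * p ∧ Int.gcd x y = 1) :
    (∃ a b : ℤ, a ^ 2 + 54 * b ^ 2 = p) ∨ (∃ a b : ℤ, 2 * a ^ 2 + 27 * b ^ 2 = p) := by
  obtain ⟨j, hj, x, y, h, -⟩ := hsol
  simp only [Set.mem_insert_iff, Set.mem_singleton_iff] at hj
  rcases hj with rfl | rfl | rfl
  · exact Or.inr ⟨2 * x, y, by linarith⟩
  · right
    have h2 : (2 : ℤ) ∣ y ^ 2 := by omega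
    obtain ⟨z, rfl⟩ := Int.prime_two.dvd_of_dvd_pow h2
    exact ⟨x, z, by linarith⟩
  · left
    have h2 : (2 : ℤ) ∣ y ^ 2 := by omega
    obtain ⟨z, rfl⟩ := Int.prime_two.dvd_of_dvd_pow h2
    rw [mul_pow] at h
    have h2 : (2 : ℤ) ∣ z ^ 2 := by omega
    obtain ⟨w, rfl⟩ := Int.prime_two.dvd_of_dvd_pow h2
    exact ⟨x, w, by linarith⟩

theorem not_dvd_aux (p : ℕ) (hp : p.Prime) (hp3 : p ≠ 3) (b c : ℤ) (hb : b ≠ 0)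
    (hbp : b ^ 2 < p) (hc : c = 9 * b ∨ c = -9 * b) : ¬ (p : ℤ) ∣ c := by
  intro h
  have hpi := Nat.prime_iff_prime_int.mp hp
  have h9 : (p : ℤ) ∣ 3 ^ 2 * b := by
    rcases hc with rfl | rfl
    · simpa using h
    · have := (dvd_neg.mpr h); norm_num at this ⊢; exact this
  rcases hpi.dvd_or_dvd h9 with h | h
  · have := hpi.dvd_of_dvd_pow h
    have : p ∣ 3 := by exact_mod_cast this
    exact hp3 ((Nat.prime_dvd_prime_iff_eq hp Nat.prime_three).mp this)
  · have h1 : (p : ℤ) ∣ b ^ 2 := dvd_pow h two_ne_zero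
    have := Int.le_of_dvd (by positivity) h1
    omega

theorem even_card (p : ℕ) (hp : p.Prime) (hp2 : p ≠ 2) (hp3 : p ≠ 3)
    (hsol : (∃ a b : ℤ, a ^ 2 + 54 * b ^ 2 = p) ∨ (∃ a b : ℤ, 2 * a ^ 2 + 27 * b ^ 2 = p))
    (N : ℕ) (hN3 : ¬ 3 ∣ N) (hpN : p ∣ N) (hpN2 : ¬ p ^ 2 ∣ N) (U : Finset (ℕ × ℕ))
    (hU : ∀ x y, (x, y) ∈ U ↔ (8 * x ^ 2 + 3 * y ^ 2 = N ∧ ¬ 3 ∣ y)) : Even U.card := by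
  have hpi := Nat.prime_iff_prime_int.mp hp
  have hp3' : ¬ (3 : ℤ) ∣ p := by
    intro h
    have : 3 ∣ p := by exact_mod_cast h
    exact hp3 ((Nat.prime_dvd_prime_iff_eq Nat.prime_three hp).mp this).symm
  rcases hsol with ⟨a, b, h⟩ | ⟨a, b, h⟩
  · have ha : ¬ (3 : ℤ) ∣ a := by
      rintro ⟨c, rfl⟩
      exact hp3' ⟨3 * c ^ 2 + 18 * b ^ 2, by rw [← h]; ring⟩
    have ha0 : a ≠ 0 := by rintro rfl; simp at ha
    have ha1 : 0 < a ^ 2 := by positivity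
    have hb : b ≠ 0 := by
      rintro rfl
      have h' : a ^ 2 = p := by linarith
      exact hpi.not_isSquare ⟨a, by rw [← h']; ring⟩
    refine fin_lemma p hp hp2 hp3 a (9 * b) (-6 * b) a 2 3 (by norm_num) (by norm_num) (by norm_num)
      ?_ ?_ (by ring) ?_ ⟨-2 * b, by ring⟩ ha
      (not_dvd_aux p hp hp3 b _ hb (by nlinarith [sq_nonneg b]) (Or.inl rfl)) N hN3 hpN hpN2 U hU
    · rw [← h]; ring
    · rw [← h]; ring
    · rw [← h]; ring
  · have ha : ¬ (3 : ℤ) ∣ a := by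
      rintro ⟨c, rfl⟩
      exact hp3' ⟨6 * c ^ 2 + 9 * b ^ 2, by rw [← h]; ring⟩
    have ha0 : a ≠ 0 := by rintro rfl; simp at ha
    have ha1 : 0 < a ^ 2 := by positivity
    have hb : b ≠ 0 := by
      rintro rfl
      have h' : (2 : ℤ) ∣ p := ⟨a ^ 2, by rw [← h]; ring⟩
      have : 2 ∣ p := by exact_mod_cast h'
      exact hp2 ((Nat.prime_dvd_prime_iff_eq Nat.prime_two hp).mp this).symm
    refine fin_lemma p hp hp2 hp3 a (-9 * b) (3 * b) (2 * a) 1 6 (by norm_num) (by norm_num)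
      (by norm_num)
      ?_ ?_ (by ring) ?_ ⟨b, by ring⟩ (by omega)
      (not_dvd_aux p hp hp3 b _ hb (by nlinarith [sq_nonneg b]) (Or.inr rfl)) N hN3 hpN hpN2 U hU
    · rw [← h]; ring
    · rw [← h]; ring
    · rw [← h]; ring

theorem arith (p : ℕ) (hp : p.Prime) (hp2 : p ≠ 2) (hp3 : p ≠ 3)
    (r : ℤ) (hr : 24 * r ≡ 1 [ZMOD (p : ℤ)]) (hr1 : 1 ≤ -r) (hr2 : -r ≤ (p : ℤ) - 1)
    (n : ℕ) (β : ℤ) (hβ0 : 0 ≤ β) (hβp : β < (p : ℤ))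
    (hβne : 24 * (p : ℤ) * β ≠ 11 * ((p : ℤ) ^ 2 + 24 * r - 1)) (M : ℤ)
    (hM : M = 24 * ((p : ℤ) ^ 2 * n + β * p - 11 * r) + 11) :
    (p : ℤ) ∣ M ∧ ¬ (p : ℤ) ^ 2 ∣ M := by
  have hpi := Nat.prime_iff_prime_int.mp hp
  have hp0 : (0 : ℤ) < p := by exact_mod_cast hp.pos
  have h2 : ¬ 2 ∣ p := fun h => hp2 ((Nat.prime_dvd_prime_iff_eq Nat.prime_two hp).mp h).symm
  have h3 : ¬ 3 ∣ p := fun h => hp3 ((Nat.prime_dvd_prime_iff_eq Nat.prime_three hp).mp h).symm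
  obtain ⟨k, hk⟩ := hr.dvd
  have hk1 : 1 ≤ k := by nlinarith
  have hk2 : k ≤ 24 := by nlinarith
  have hM' : M = p * (p * (24 * n) + (24 * β + 11 * k)) := by
    rw [hM]; linear_combination 11 * hk
  refine ⟨⟨_, hM'⟩, ?_⟩
  rintro ⟨c, hc⟩
  have hd : (p : ℤ) ∣ 24 * β + 11 * k := by
    refine ⟨c - 24 * n, ?_⟩
    apply mul_left_cancel₀ hp0.ne'
    linear_combination hc - hM'
  have hmod : (24 : ℤ) ∣ p - k := by
    obtain ⟨q, s, hq, hs⟩ : ∃ q s : ℤ, (p : ℤ) = 24 * q + s ∧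
        (s = 1 ∨ s = 5 ∨ s = 7 ∨ s = 11 ∨ s = 13 ∨ s = 17 ∨ s = 19 ∨ s = 23) :=
      ⟨p / 24, p % 24, by omega, by omega⟩
    have h24 : ∃ t, s * k = 24 * t + 1 := ⟨-r - q * k, by rw [hq] at hk; linear_combination -hk⟩
    obtain ⟨t, ht⟩ := h24
    rcases hs with rfl | rfl | rfl | rfl | rfl | rfl | rfl | rfl <;> omega
  obtain ⟨t, ht⟩ := hmod
  have hp5 : 5 ≤ p := by
    have := hp.two_le
    by_contra h
    interval_cases p <;> omega
  have ht0 : 0 ≤ t := by omega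
  have hd2 : (p : ℤ) ∣ 24 * (β - 11 * t) := by
    have : 24 * (β - 11 * t) = (24 * β + 11 * k) - p * 11 := by linear_combination 11 * ht
    rw [this]; exact dvd_sub hd (dvd_mul_right _ _)
  have hd3 : (p : ℤ) ∣ β - 11 * t := by
    refine (hpi.dvd_or_dvd hd2).resolve_left ?_
    intro h
    have h : p ∣ 2 ^ 3 * 3 := by exact_mod_cast h
    rcases hp.dvd_mul.mp h with h | h
    · exact hp2 ((Nat.prime_dvd_prime_iff_eq hp Nat.prime_two).mp (hp.dvd_of_dvd_pow h))
    · exact hp3 ((Nat.prime_dvd_prime_iff_eq hp Nat.prime_three).mp h)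
  have : β - 11 * t = 0 := by
    apply Int.eq_zero_of_abs_lt_dvd hd3
    rw [abs_lt]; omega
  apply hβne
  have hb : β = 11 * t := by omega
  rw [hb]
  linear_combination (-11) * (p:ℤ) * ht + 11 * hk


end Helpers

theorem stmt_0 (p : ℕ) (hp : p.Prime) (hodd : Odd p)
    (hsol : ∃ j ∈ ({1, 4, 8} : Set ℤ), ∃ x y : ℤ,
      8 * x ^ 2 + 27 * y ^ 2 = j * p ∧ Int.gcd x y = 1)
    (r : ℤ) (hr : 24 * r ≡ 1 [ZMOD (p : ℤ)]) (hr1 : 1 ≤ -r) (hr2 : -r ≤ (p : ℤ) - 1)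
    (n : ℕ) (β : ℤ) (hβ0 : 0 ≤ β) (hβp : β < (p : ℤ))
    (hβne : 24 * (p : ℤ) * β ≠ 11 * ((p : ℤ) ^ 2 + 24 * r - 1))
    (N : ℕ) (hN : (N : ℤ) = 4 * ((p : ℤ) ^ 2 * n + β * p - 11 * r) + 1) :
    b21 N % 2 = 0 := by
  have hp2 : p ≠ 2 := by rintro rfl; revert hodd; decide
  have hp3 : p ≠ 3 := by
    rintro rfl
    obtain ⟨k, hk⟩ := hr.dvd
    push_cast at hk
    omega
  obtain ⟨m, hm⟩ : ∃ m : ℕ, (m : ℤ) = (p : ℤ) ^ 2 * n + β * p - 11 * r := by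
    refine ⟨((p : ℤ) ^ 2 * n + β * p - 11 * r).toNat, Int.toNat_of_nonneg ?_⟩
    have : 0 ≤ (p : ℤ) ^ 2 * n + β * p := by positivity
    omega
  have hNm : N = 4 * m + 1 := by rw [← hm] at hN; omega
  obtain ⟨U, hU⟩ := exists_finset_nat 8 3 (by norm_num) (by norm_num) (24 * m + 11)
    (fun _ y => ¬ 3 ∣ y)
  obtain ⟨d1, d2⟩ := arith p hp hp2 hp3 r hr hr1 hr2 n β hβ0 hβp hβne ((24 * m + 11 : ℕ) : ℤ)
    (by push_cast; rw [hm])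
  have hE := even_card p hp hp2 hp3 (sol_form p hsol) (24 * m + 11) (by omega)
    (by exact_mod_cast d1) (fun h => d2 (by exact_mod_cast h)) U hU
  have hmain := main_parity m U hU
  rw [(ZMod.natCast_eq_zero_iff_even).mpr hE, ZMod.natCast_eq_zero_iff_even, ← hNm] at hmain
  exact Nat.even_iff.mp hmain
end

section
/- Let p ≥ 5 be a prime with p ≠ 11. If b₂₁((11p^2 − 5)/6) is odd, then for all integers n, k ≥ 0 and every integer β with 1 ≤ β < p, one has b₂₁(4p^{4k+4} n + 4p^{4k+3} β + (11p^{4k+4} − 5)/6) ≡ 0 (mod 2). -/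
open PowerSeries in
/-- Euler's product mod 2, in indicator form. -/
noncomputable def Eser : (ZMod 2)⟦X⟧ :=
  PowerSeries.mk fun n => if IsSquare (24 * n + 1) then 1 else 0

lemma exists_pentagonal_iff (n : ℕ) : n ∈ Set.range pentagonal ↔ IsSquare (24 * n + 1) := by
  constructor
  · rintro ⟨k, rfl⟩
    have h := two_mul_natCast_pentagonal k
    refine ⟨(6 * k - 1).natAbs, ?_⟩
    zify
    rw [← pow_two, sq_abs]
    linarith
  · rintro ⟨x, hx⟩
    have h6 : x % 6 = 1 ∨ x % 6 = 5 := by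
      have h1 : (x * x) % 6 = 1 := by omega
      rw [Nat.mul_mod] at h1
      have : x % 6 < 6 := Nat.mod_lt _ (by norm_num)
      interval_cases x % 6 <;> simp_all
    have key : ∀ k : ℤ, (x : ℤ) ^ 2 = (6 * k - 1) ^ 2 → pentagonal k = n := by
      intro k hk
      have h := two_mul_natCast_pentagonal k
      zify at hx ⊢
      nlinarith
    rcases h6 with h | h
    · refine ⟨-(x / 6 : ℕ), key _ ?_⟩
      have : x = 6 * (x / 6) + 1 := by omega
      generalize x / 6 = t at *
      subst this
      push_cast
      ring
    · refine ⟨((x / 6 : ℕ) : ℤ) + 1, key _ ?_⟩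
      have : x = 6 * (x / 6) + 5 := by omega
      generalize x / 6 = t at *
      subst this
      push_cast
      ring

open PowerSeries in
lemma pentagonalSeries_eq : pentagonalSeries (ZMod 2) = Eser := by
  ext n
  have h2 : ∀ a : ZMod 2, a ≠ 0 → a = 1 := by decide
  rw [Eser, coeff_mk]
  split_ifs with h
  · apply h2
    rw [Ne, coeff_pentagonalSeries_eq_zero_iff, not_not]
    exact (exists_pentagonal_iff n).2 h
  · rw [coeff_pentagonalSeries_eq_zero_iff]
    exact fun h' => h ((exists_pentagonal_iff n).1 h')

open PowerSeries PowerSeries.WithPiTopology in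
lemma b21_mul : (PowerSeries.mk fun n => (b21 n : ZMod 2)) * Eser =
    expand 21 (by norm_num) Eser := by
  let _ : TopologicalSpace (ZMod 2) := ⊥
  have _ : DiscreteTopology (ZMod 2) := ⟨rfl⟩
  have hP := Nat.Partition.hasProd_powerSeriesMk_card_restricted (ZMod 2) (fun i => ¬ 21 ∣ i)
  have hE := hasProd_one_sub_X_pow (ZMod 2)
  rw [pentagonalSeries_eq] at hE
  have hcont : Continuous (expand (R := ZMod 2) 21 (by norm_num)) := by
    rw [continuous_iff_continuousAt]
    intro f
    rw [ContinuousAt, tendsto_iff_coeff_tendsto]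
    intro d
    simp_rw [coeff_expand]
    split_ifs
    · exact (continuous_coeff (ZMod 2) (d / 21)).tendsto f
    · exact tendsto_const_nhds
  have hE21 := hE.map (expand (R := ZMod 2) 21 (by norm_num)) hcont
  have hPE := hP.mul hE
  have hb : (PowerSeries.mk fun n => (b21 n : ZMod 2)) =
    (PowerSeries.mk fun n ↦ ((Nat.Partition.restricted n (fun i => ¬ 21 ∣ i)).card : ZMod 2)) := rfl
  rw [hb]
  refine hPE.unique ?_
  have hinj : Function.Injective (fun i : ℕ => 21 * i + 20) := fun a b h => by
    simp only at h
    omega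
  rw [← hinj.hasProd_iff]
  · refine Eq.subst (motive := fun g => HasProd g _) (funext fun i => ?_) hE21
    have : 21 ∣ 21 * i + 20 + 1 := ⟨i + 1, by ring⟩
    simp only [Function.comp, this, not_true, if_false, one_mul, map_sub, map_one, map_pow,
      expand_X, ← pow_mul]
    congr 2
  · intro i hi
    have : ¬ 21 ∣ i + 1 := by
      rintro ⟨c, hc⟩
      exact hi ⟨c - 1, by simp only; omega⟩
    simp only [this, not_false_eq_true, if_true, pow_mul]
    exact tsum_pow_mul_one_sub_of_constantCoeff_eq_zero (by simp)

open PowerSeries in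
lemma sq_eq_expand (f : (ZMod 2)⟦X⟧) : f ^ 2 = expand 2 (by norm_num) f := by
  have h := MvPowerSeries.map_frobenius_expand 2 (by norm_num) (f := f)
  rw [← h, ZMod.frobenius_zmod]
  simp [expand]

open PowerSeries in
lemma pow_four_eq_expand (f : (ZMod 2)⟦X⟧) : f ^ 4 = expand 4 (by norm_num) f := by
  have : f ^ 4 = (f ^ 2) ^ 2 := by ring
  rw [this, sq_eq_expand, sq_eq_expand, ← expand_mul 2 (by norm_num) 2 (by norm_num)]

section parity
open Finset

lemma card_parity {α : Type*} [DecidableEq α] (D : Finset α) (σ : α → α)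
    (hσ : ∀ a ∈ D, σ a ∈ D) (hinv : ∀ a ∈ D, σ (σ a) = a) :
    (#D : ZMod 2) = (#(D.filter fun a => σ a = a) : ZMod 2) := by
  rw [← card_filter_add_card_filter_not (s := D) (fun a => σ a = a)]
  push_cast
  rw [add_eq_left]
  have : (∑ a ∈ D.filter (fun a => ¬ σ a = a), (1 : ZMod 2)) = 0 := by
    refine sum_involution (fun a _ => σ a) ?_ ?_ ?_ ?_
    · intro a _
      decide
    · intro a ha _
      exact (mem_filter.1 ha).2
    · intro a ha
      rw [mem_filter] at ha ⊢
      refine ⟨hσ a ha.1, fun h => ha.2 ?_⟩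
      rw [hinv a ha.1] at h
      exact h.symm
    · intro a ha
      exact hinv a (mem_filter.1 ha).1
  simpa using this

/-- integer box -/
noncomputable def boxZ (N : ℕ) : Finset (ℤ × ℤ) := Icc (-(N : ℤ)) N ×ˢ Icc (-(N : ℤ)) N

lemma mem_Icc_of_sq {x : ℤ} {N : ℕ} (h : x ^ 2 ≤ N) : x ∈ Icc (-(N : ℤ)) N := by
  rw [mem_Icc]
  constructor
  · rcases lt_or_ge x 0 with h0 | h0 <;> nlinarith
  · rcases lt_or_ge x 1 with h0 | h0 <;> nlinarith

lemma mem_boxZ_of {x y : ℤ} {N : ℕ} (hx : x ^ 2 ≤ N) (hy : y ^ 2 ≤ N) : (x, y) ∈ boxZ N := by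
  rw [boxZ, mem_product]
  exact ⟨mem_Icc_of_sq hx, mem_Icc_of_sq hy⟩

lemma sq_form24 (x : ℤ) (h2 : ¬ (2 : ℤ) ∣ x) (h3 : ¬ (3 : ℤ) ∣ x) :
    ∃ t : ℕ, x ^ 2 = 24 * t + 1 := by
  have h : x ^ 2 % 24 = 1 := by
    have h1 : 0 ≤ x % 24 := Int.emod_nonneg _ (by norm_num)
    have h2 : x % 24 < 24 := Int.emod_lt_of_pos _ (by norm_num)
    rw [pow_two, Int.mul_emod]
    generalize hr : x % 24 = r at *
    interval_cases r <;> first | rfl | omega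
  have := sq_nonneg x
  exact ⟨(x ^ 2 / 24).toNat, by omega⟩

lemma sq_form8 (x : ℤ) (h2 : ¬ (2 : ℤ) ∣ x) : ∃ t : ℕ, x ^ 2 = 8 * t + 1 := by
  have h : x ^ 2 % 8 = 1 := by
    have h1 : 0 ≤ x % 8 := Int.emod_nonneg _ (by norm_num)
    have h2 : x % 8 < 8 := Int.emod_lt_of_pos _ (by norm_num)
    rw [pow_two, Int.mul_emod]
    generalize hr : x % 8 = r at *
    interval_cases r <;> first | rfl | omega
  have := sq_nonneg x
  exact ⟨(x ^ 2 / 8).toNat, by omega⟩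

lemma sq_form3 (x : ℤ) (h3 : ¬ (3 : ℤ) ∣ x) : ∃ t : ℕ, x ^ 2 = 3 * t + 1 := by
  have h : x ^ 2 % 3 = 1 := by
    have h1 : 0 ≤ x % 3 := Int.emod_nonneg _ (by norm_num)
    have h2 : x % 3 < 3 := Int.emod_lt_of_pos _ (by norm_num)
    rw [pow_two, Int.mul_emod]
    generalize hr : x % 3 = r at *
    interval_cases r <;> first | rfl | omega
  have := sq_nonneg x
  exact ⟨(x ^ 2 / 3).toNat, by omega⟩

lemma sq_form4 (x : ℤ) (h2 : (2 : ℤ) ∣ x) : ∃ t : ℕ, x ^ 2 = 4 * t := by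
  obtain ⟨c, rfl⟩ := h2
  exact ⟨(c ^ 2).toNat, by rw [Int.toNat_of_nonneg (sq_nonneg c)]; ring⟩

lemma sq_form9 (x : ℤ) (h3 : (3 : ℤ) ∣ x) : ∃ t : ℕ, x ^ 2 = 9 * t := by
  obtain ⟨c, rfl⟩ := h3
  exact ⟨(c ^ 2).toNat, by rw [Int.toNat_of_nonneg (sq_nonneg c)]; ring⟩

open PowerSeries in
lemma coeff_mk_mul_mk (p q : ℕ → Prop) [DecidablePred p] [DecidablePred q] (n : ℕ) :
    coeff n ((PowerSeries.mk fun n => if p n then (1 : ZMod 2) else 0) *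
      (PowerSeries.mk fun n => if q n then (1 : ZMod 2) else 0)) =
    (#((antidiagonal n).filter fun a => p a.1 ∧ q a.2) : ZMod 2) := by
  rw [coeff_mul, card_filter]
  push_cast
  refine sum_congr rfl fun a _ => ?_
  rw [coeff_mk, coeff_mk]
  split_ifs <;> simp_all

open PowerSeries in
lemma expand_mk (d : ℕ) (hd : d ≠ 0) (p : ℕ → Prop) [DecidablePred p] :
    expand d hd (PowerSeries.mk fun n => if p n then (1 : ZMod 2) else 0) =
    PowerSeries.mk fun n => if d ∣ n ∧ p (n / d) then (1 : ZMod 2) else 0 := by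
  ext n
  rw [coeff_expand, coeff_mk, coeff_mk]
  split_ifs <;> simp_all

lemma pos_sq_inj {x y : ℤ} (hx : 0 < x) (hy : 0 < y) (h : x ^ 2 = y ^ 2) : x = y := by
  nlinarith

end parity

section jacobi
open Finset

/-- Darts for `x^2+2y^2`. -/
noncomputable def DJ (N : ℕ) : Finset (ℤ × ℤ) :=
  (boxZ N).filter fun q => 0 < q.1 ∧ (3 : ℤ) ∣ q.1 - q.2 ∧ q.1 ^ 2 + 2 * q.2 ^ 2 = N

lemma mem_DJ {N : ℕ} {q : ℤ × ℤ} :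
    q ∈ DJ N ↔ 0 < q.1 ∧ (3 : ℤ) ∣ q.1 - q.2 ∧ q.1 ^ 2 + 2 * q.2 ^ 2 = N := by
  rw [DJ, mem_filter, and_iff_right_iff_imp]
  rintro ⟨_, _, h⟩
  exact mem_boxZ_of (by nlinarith [sq_nonneg q.2]) (by nlinarith [sq_nonneg q.1])

lemma DJ_odd {n : ℕ} {x y : ℤ} (h : x ^ 2 + 2 * y ^ 2 = ((24 * n + 3 : ℕ) : ℤ)) :
    ¬ (2 : ℤ) ∣ x ∧ ¬ (2 : ℤ) ∣ y := by
  push_cast at h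
  have hx : ¬ (2 : ℤ) ∣ x := by
    intro h2
    obtain ⟨t, ht⟩ := sq_form4 x h2
    omega
  refine ⟨hx, fun h2 => ?_⟩
  obtain ⟨t, ht⟩ := sq_form4 y h2
  obtain ⟨s, hs⟩ := sq_form8 x hx
  omega

/-- normalise sign -/
def nrm (q : ℤ × ℤ) : ℤ × ℤ := if 0 < q.1 then q else (-q.1, -q.2)

lemma DJ_card (n : ℕ) : (#(DJ (24 * n + 3)) : ZMod 2) = if IsSquare (8 * n + 1) then 1 else 0 := by
  rw [card_parity (DJ (24 * n + 3)) (fun q => nrm ((4 * q.2 - q.1) / 3, (2 * q.1 + q.2) / 3))]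
  · have hfix : ∀ q : ℤ × ℤ, q ∈ (DJ (24 * n + 3)).filter
        (fun q => nrm ((4 * q.2 - q.1) / 3, (2 * q.1 + q.2) / 3) = q) ↔
        0 < q.1 ∧ q.2 = q.1 ∧ q.1 ^ 2 = 8 * n + 1 := by
      rintro ⟨x, y⟩
      rw [mem_filter, mem_DJ]
      constructor
      · rintro ⟨⟨h0, h3, h⟩, hf⟩
        have := (DJ_odd h).1
        obtain ⟨c, hc⟩ := h3
        simp only at *
        unfold nrm at hf
        have hyx : y = x := by
          split_ifs at hf <;> simp only [Prod.mk.injEq] at hf <;> omega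
        subst hyx
        refine ⟨h0, rfl, ?_⟩
        push_cast at h
        linarith
      · rintro ⟨h0, h1, h⟩
        simp only at *
        subst h1
        refine ⟨⟨h0, by simp, ?_⟩, ?_⟩
        · push_cast
          linarith
        · have e1 : (4 * y - y) / 3 = y := by omega
          have e2 : (2 * y + y) / 3 = y := by omega
          simp [e1, e2, nrm, h0]
    split_ifs with hs
    · obtain ⟨s, hs⟩ := hs
      have : (DJ (24 * n + 3)).filter
        (fun q => nrm ((4 * q.2 - q.1) / 3, (2 * q.1 + q.2) / 3) = q) = {((s : ℤ), (s : ℤ))} := by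
        ext ⟨x, y⟩
        rw [hfix, mem_singleton, Prod.mk.injEq]
        simp only
        have hs0 : 0 < s := by
          rcases Nat.eq_zero_or_pos s with h | h
          · subst h
            omega
          · exact h
        zify at hs
        constructor
        · rintro ⟨h0, h1, h⟩
          have : x = s := pos_sq_inj h0 (by exact_mod_cast hs0) (by linarith)
          exact ⟨this, by omega⟩
        · rintro ⟨rfl, rfl⟩
          exact ⟨by exact_mod_cast hs0, rfl, by linarith⟩
      rw [this]
      simp
    · have : (DJ (24 * n + 3)).filter
        (fun q => nrm ((4 * q.2 - q.1) / 3, (2 * q.1 + q.2) / 3) = q) = ∅ := by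
        rw [eq_empty_iff_forall_notMem]
        intro q hq
        rw [hfix] at hq
        refine hs ⟨q.1.natAbs, ?_⟩
        zify
        rw [← pow_two, sq_abs]
        exact hq.2.2.symm
      rw [this]
      simp
  · rintro ⟨x, y⟩ hq
    rw [mem_DJ] at hq ⊢
    obtain ⟨h0, ⟨c, hc⟩, h⟩ := hq
    have hodd := DJ_odd h
    simp only at *
    have e1 : (4 * y - x) / 3 = x - 4 * c := by omega
    have e2 : (2 * x + y) / 3 = x - c := by omega
    obtain rfl : y = x - 3 * c := by omega
    rw [e1, e2]
    unfold nrm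
    split_ifs with hp
    · exact ⟨hp, ⟨-c, by ring⟩, by rw [← h]; ring⟩
    · simp only at hp ⊢
      exact ⟨by omega, ⟨c, by ring⟩, by rw [← h]; ring⟩
  · rintro ⟨x, y⟩ hq
    rw [mem_DJ] at hq
    obtain ⟨h0, ⟨c, hc⟩, h⟩ := hq
    simp only at *
    have e1 : (4 * y - x) / 3 = x - 4 * c := by omega
    have e2 : (2 * x + y) / 3 = x - c := by omega
    rw [e1, e2]
    unfold nrm
    simp only
    split_ifs <;> simp only [Prod.mk.injEq] at * <;> omega

lemma DJ_card' (n : ℕ) : (#(DJ (24 * n + 3)) : ZMod 2) =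
    #((DJ (24 * n + 3)).filter fun q => ¬ (3 : ℤ) ∣ q.1) := by
  rw [← card_filter_add_card_filter_not (s := DJ (24 * n + 3)) (fun q => (3 : ℤ) ∣ q.1)]
  push_cast
  rw [add_eq_right]
  rw [card_parity _ (fun q => (q.1, -q.2))]
  · rw [filter_eq_empty_iff.2]
    · simp
    rintro ⟨x, y⟩ hq
    rw [mem_filter, mem_DJ] at hq
    have := (DJ_odd hq.1.2.2).2
    simp only [Prod.mk.injEq] at *
    omega
  · rintro ⟨x, y⟩ hq
    rw [mem_filter, mem_DJ] at hq ⊢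
    simp only at *
    refine ⟨⟨hq.1.1, by omega, by linarith [hq.1.2.2, neg_sq y]⟩, hq.2⟩
  · simp

/-- Triangular series mod 2. -/
noncomputable def Pser : PowerSeries (ZMod 2) :=
  PowerSeries.mk fun n => if IsSquare (8 * n + 1) then 1 else 0

open PowerSeries in
lemma jacobi_mod2 : Eser * expand 2 (by norm_num) Eser = Pser := by
  ext n
  rw [Eser, expand_mk, coeff_mk_mul_mk, Pser, coeff_mk, ← DJ_card, DJ_card']
  congr 1
  symm
  refine card_bij (fun q _ => (((q.1 ^ 2 - 1) / 24).toNat, ((q.2 ^ 2 - 1) / 12).toNat)) ?_ ?_ ?_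
  · rintro ⟨x, y⟩ hq
    rw [mem_filter, mem_DJ] at hq
    obtain ⟨⟨h0, h3, h⟩, h3x⟩ := hq
    simp only at *
    have hodd := DJ_odd h
    obtain ⟨s, hs⟩ := sq_form24 x hodd.1 h3x
    obtain ⟨t, ht⟩ := sq_form24 y hodd.2 (by omega)
    rw [hs, ht] at h ⊢
    have e1 : (((24 * s + 1 - 1) / 24 : ℤ)).toNat = s := by omega
    have e2 : (((24 * t + 1 - 1) / 12 : ℤ)).toNat = 2 * t := by omega
    rw [e1, e2, mem_filter, HasAntidiagonal.mem_antidiagonal]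
    simp only
    refine ⟨by omega, ⟨x.natAbs, ?_⟩, ⟨t, rfl⟩, ⟨y.natAbs, ?_⟩⟩
    · zify
      rw [← pow_two, sq_abs, hs]
    · rw [Nat.mul_div_cancel_left _ (by norm_num)]
      zify
      rw [← pow_two, sq_abs, ht]
  · rintro ⟨x, y⟩ hq ⟨x', y'⟩ hq' heq
    rw [mem_filter, mem_DJ] at hq hq'
    obtain ⟨⟨h0, h3, h⟩, h3x⟩ := hq
    obtain ⟨⟨h0', h3', h'⟩, h3x'⟩ := hq'
    simp only [Prod.mk.injEq] at *
    have hodd := DJ_odd h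
    have hodd' := DJ_odd h'
    obtain ⟨s, hs⟩ := sq_form24 x hodd.1 h3x
    obtain ⟨t, ht⟩ := sq_form24 y hodd.2 (by omega)
    obtain ⟨s', hs'⟩ := sq_form24 x' hodd'.1 h3x'
    obtain ⟨t', ht'⟩ := sq_form24 y' hodd'.2 (by omega)
    have hx : x = x' := pos_sq_inj h0 h0' (by omega)
    have hy : y ^ 2 = y' ^ 2 := by omega
    rcases sq_eq_sq_iff_eq_or_eq_neg.1 hy with hy | hy <;> omega
  · rintro ⟨i, j⟩ hij
    rw [mem_filter, HasAntidiagonal.mem_antidiagonal] at hij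
    obtain ⟨hn, ⟨s, hs⟩, ⟨t, rfl⟩, ⟨r, hr⟩⟩ := hij
    simp only at *
    rw [Nat.mul_div_cancel_left _ (by norm_num)] at hr
    have hs' : (s : ℤ) ^ 2 = 24 * i + 1 := by
      zify at hs
      linarith
    have hr' : (r : ℤ) ^ 2 = 24 * t + 1 := by
      zify at hr
      linarith
    have hs3 : ¬ (3 : ℤ) ∣ s := by
      intro h
      obtain ⟨k, hk⟩ := sq_form9 _ h
      omega
    have hr3 : ¬ (3 : ℤ) ∣ r := by
      intro h
      obtain ⟨k, hk⟩ := sq_form9 _ h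
      omega
    have hs0 : (0 : ℤ) < s := by omega
    obtain ⟨y, hy, hy3⟩ : ∃ y : ℤ, y ^ 2 = r ^ 2 ∧ (3 : ℤ) ∣ s - y := by
      have a1 : (s : ℤ) % 3 = 1 ∨ (s : ℤ) % 3 = 2 := by omega
      have a2 : (r : ℤ) % 3 = 1 ∨ (r : ℤ) % 3 = 2 := by omega
      by_cases h : (3 : ℤ) ∣ s - r
      · exact ⟨r, rfl, h⟩
      · refine ⟨-r, by ring, ?_⟩
        rcases a1 with a1 | a1 <;> rcases a2 with a2 | a2 <;> omega
    refine ⟨(s, y), ?_, ?_⟩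
    · rw [mem_filter, mem_DJ]
      simp only
      refine ⟨⟨hs0, hy3, ?_⟩, hs3⟩
      push_cast
      omega
    · simp only [Prod.mk.injEq]
      omega

lemma E_cube : Eser ^ 3 = Pser := by
  rw [← jacobi_mod2, ← sq_eq_expand]
  ring

end jacobi

section formB
open Finset

/-- Darts for `x^2+8z^2`. -/
noncomputable def DB (N : ℕ) : Finset (ℤ × ℤ) :=
  (boxZ N).filter fun q => 0 < q.1 ∧ (3 : ℤ) ∣ q.1 - q.2 ∧ q.1 ^ 2 + 8 * q.2 ^ 2 = N

lemma mem_DB {N : ℕ} {q : ℤ × ℤ} :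
    q ∈ DB N ↔ 0 < q.1 ∧ (3 : ℤ) ∣ q.1 - q.2 ∧ q.1 ^ 2 + 8 * q.2 ^ 2 = N := by
  rw [DB, mem_filter, and_iff_right_iff_imp]
  rintro ⟨_, _, h⟩
  exact mem_boxZ_of (by nlinarith [sq_nonneg q.2]) (by nlinarith [sq_nonneg q.1])

lemma DB_odd {n : ℕ} {x y : ℤ} (h : x ^ 2 + 8 * y ^ 2 = ((24 * n + 9 : ℕ) : ℤ)) :
    ¬ (2 : ℤ) ∣ x := by
  push_cast at h
  intro h2
  obtain ⟨t, ht⟩ := sq_form4 x h2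
  omega

lemma DB_card (n : ℕ) : (#(DB (24 * n + 9)) : ZMod 2) = 0 := by
  rw [card_parity (DB (24 * n + 9)) (fun q => nrm ((q.1 + 8 * q.2) / 3, (q.1 - q.2) / 3))]
  · rw [filter_eq_empty_iff.2]
    · simp
    rintro ⟨x, y⟩ hq hf
    rw [mem_DB] at hq
    obtain ⟨h0, ⟨c, hc⟩, h⟩ := hq
    have := DB_odd h
    simp only at *
    unfold nrm at hf
    split_ifs at hf <;> simp only [Prod.mk.injEq] at hf <;> omega
  · rintro ⟨x, y⟩ hq
    rw [mem_DB] at hq ⊢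
    obtain ⟨h0, ⟨c, hc⟩, h⟩ := hq
    have hodd := DB_odd h
    simp only at *
    have e1 : (x + 8 * y) / 3 = 3 * x - 8 * c := by omega
    have e2 : (x - y) / 3 = c := by omega
    obtain rfl : y = x - 3 * c := by omega
    rw [e1, e2]
    unfold nrm
    split_ifs with hp
    · exact ⟨hp, ⟨x - 3 * c, by ring⟩, by rw [← h]; ring⟩
    · simp only at hp ⊢
      exact ⟨by omega, ⟨-(x - 3 * c), by ring⟩, by rw [← h]; ring⟩
  · rintro ⟨x, y⟩ hq
    rw [mem_DB] at hq
    obtain ⟨h0, ⟨c, hc⟩, h⟩ := hq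
    simp only at *
    have e1 : (x + 8 * y) / 3 = 3 * x - 8 * c := by omega
    have e2 : (x - y) / 3 = c := by omega
    rw [e1, e2]
    unfold nrm
    simp only
    split_ifs <;> simp only [Prod.mk.injEq] at * <;> omega

lemma DB_card' (n : ℕ) : (#((DB (24 * n + 9)).filter fun q => ¬ (3 : ℤ) ∣ q.1) : ZMod 2) =
    if 3 ∣ n ∧ IsSquare (8 * (n / 3) + 1) then 1 else 0 := by
  have h0 := DB_card n
  rw [← card_filter_add_card_filter_not (s := DB (24 * n + 9)) (fun q => (3 : ℤ) ∣ q.1)] at h0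
  push_cast at h0
  have h2 : ∀ a b : ZMod 2, a + b = 0 → b = a := by decide
  rw [h2 _ _ h0]
  rw [card_parity _ (fun q => (q.1, -q.2))]
  · split_ifs with hs
    · obtain ⟨⟨m, rfl⟩, w, hw⟩ := hs
      rw [Nat.mul_div_cancel_left _ (by norm_num)] at hw
      have hw0 : (0 : ℤ) < w := by
        rcases Nat.eq_zero_or_pos w with h | h
        · subst h
          omega
        · exact_mod_cast h
      zify at hw
      rw [card_eq_one.2]
      · simp
      refine ⟨(3 * w, 0), ?_⟩
      ext ⟨x, y⟩
      rw [mem_filter, mem_filter, mem_DB, mem_singleton]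
      simp only [Prod.mk.injEq]
      push_cast
      constructor
      · rintro ⟨⟨⟨h0, h3, h⟩, h3x⟩, -, hy⟩
        obtain rfl : y = 0 := by omega
        exact ⟨pos_sq_inj h0 (by omega) (by linarith), rfl⟩
      · rintro ⟨rfl, rfl⟩
        exact ⟨⟨⟨by omega, by omega, by linarith⟩, by omega⟩, trivial, by norm_num⟩
    · rw [filter_eq_empty_iff.2]
      · simp
      rintro ⟨x, y⟩ hq hf
      rw [mem_filter, mem_DB] at hq
      obtain ⟨⟨h0, h3, h⟩, w, hw⟩ := hq
      simp only [Prod.mk.injEq] at *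
      obtain rfl : y = 0 := by omega
      subst hw
      push_cast at h
      have hn : (n : ℤ) = 3 * (n / 3) := by
        have : (3 : ℤ) * w ^ 2 = 8 * n + 3 := by linarith
        omega
      refine hs ⟨by omega, w.natAbs, ?_⟩
      zify
      rw [← pow_two, sq_abs]
      linarith
  · rintro ⟨x, y⟩ hq
    rw [mem_filter, mem_DB] at hq ⊢
    simp only at *
    refine ⟨⟨hq.1.1, by omega, by linarith [hq.1.2.2, neg_sq y]⟩, hq.2⟩
  · simp

/-- The series `∑ q^((z^2-1)/3)`. -/
noncomputable def Gser : PowerSeries (ZMod 2) :=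
  PowerSeries.mk fun n => if IsSquare (3 * n + 1) then 1 else 0

open PowerSeries in
lemma cubic_mod2 : Eser * Gser = expand 3 (by norm_num) Pser := by
  ext n
  rw [Eser, Pser, expand_mk, Gser, coeff_mk_mul_mk, coeff_mk, ← DB_card']
  congr 1
  symm
  refine card_bij (fun q _ => (((q.1 ^ 2 - 1) / 24).toNat, ((q.2 ^ 2 - 1) / 3).toNat)) ?_ ?_ ?_
  · rintro ⟨x, y⟩ hq
    rw [mem_filter, mem_DB] at hq
    obtain ⟨⟨h0, h3, h⟩, h3x⟩ := hq
    simp only at *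
    have hodd := DB_odd h
    obtain ⟨s, hs⟩ := sq_form24 x hodd h3x
    obtain ⟨t, ht⟩ := sq_form3 y (by omega)
    rw [hs, ht] at h ⊢
    have e1 : (((24 * s + 1 - 1) / 24 : ℤ)).toNat = s := by omega
    have e2 : (((3 * t + 1 - 1) / 3 : ℤ)).toNat = t := by omega
    rw [e1, e2, mem_filter, HasAntidiagonal.mem_antidiagonal]
    simp only
    refine ⟨by omega, ⟨x.natAbs, ?_⟩, ⟨y.natAbs, ?_⟩⟩
    · zify
      rw [← pow_two, sq_abs, hs]
    · zify
      rw [← pow_two, sq_abs, ht]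
  · rintro ⟨x, y⟩ hq ⟨x', y'⟩ hq' heq
    rw [mem_filter, mem_DB] at hq hq'
    obtain ⟨⟨h0, h3, h⟩, h3x⟩ := hq
    obtain ⟨⟨h0', h3', h'⟩, h3x'⟩ := hq'
    simp only [Prod.mk.injEq] at *
    have hodd := DB_odd h
    have hodd' := DB_odd h'
    obtain ⟨s, hs⟩ := sq_form24 x hodd h3x
    obtain ⟨t, ht⟩ := sq_form3 y (by omega)
    obtain ⟨s', hs'⟩ := sq_form24 x' hodd' h3x'
    obtain ⟨t', ht'⟩ := sq_form3 y' (by omega)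
    have hx : x = x' := pos_sq_inj h0 h0' (by omega)
    have hy : y ^ 2 = y' ^ 2 := by omega
    rcases sq_eq_sq_iff_eq_or_eq_neg.1 hy with hy | hy <;> omega
  · rintro ⟨i, j⟩ hij
    rw [mem_filter, HasAntidiagonal.mem_antidiagonal] at hij
    obtain ⟨hn, ⟨s, hs⟩, ⟨r, hr⟩⟩ := hij
    simp only at *
    have hs' : (s : ℤ) ^ 2 = 24 * i + 1 := by
      zify at hs
      linarith
    have hr' : (r : ℤ) ^ 2 = 3 * j + 1 := by
      zify at hr
      linarith
    have hs3 : ¬ (3 : ℤ) ∣ s := by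
      intro h
      obtain ⟨k, hk⟩ := sq_form9 _ h
      omega
    have hr3 : ¬ (3 : ℤ) ∣ r := by
      intro h
      obtain ⟨k, hk⟩ := sq_form9 _ h
      omega
    have hs0 : (0 : ℤ) < s := by omega
    obtain ⟨y, hy, hy3⟩ : ∃ y : ℤ, y ^ 2 = r ^ 2 ∧ (3 : ℤ) ∣ s - y := by
      have a1 : (s : ℤ) % 3 = 1 ∨ (s : ℤ) % 3 = 2 := by omega
      have a2 : (r : ℤ) % 3 = 1 ∨ (r : ℤ) % 3 = 2 := by omega
      by_cases h : (3 : ℤ) ∣ s - r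
      · exact ⟨r, rfl, h⟩
      · refine ⟨-r, by ring, ?_⟩
        rcases a1 with a1 | a1 <;> rcases a2 with a2 | a2 <;> omega
    refine ⟨(s, y), ?_, ?_⟩
    · rw [mem_filter, mem_DB]
      simp only
      refine ⟨⟨hs0, hy3, ?_⟩, hs3⟩
      push_cast
      omega
    · simp only [Prod.mk.injEq]
      omega

end formB

section formA
open Finset

/-- Darts for `w^2+7x^2`. -/
noncomputable def DA (N : ℕ) : Finset (ℤ × ℤ) :=
  (boxZ N).filter fun q =>
    0 < q.1 ∧ ¬ (3 : ℤ) ∣ q.1 ∧ (16 : ℤ) ∣ q.2 - 3 * q.1 ∧ q.2 ^ 2 + 7 * q.1 ^ 2 = N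

lemma mem_DA {N : ℕ} {q : ℤ × ℤ} :
    q ∈ DA N ↔ 0 < q.1 ∧ ¬ (3 : ℤ) ∣ q.1 ∧ (16 : ℤ) ∣ q.2 - 3 * q.1 ∧
      q.2 ^ 2 + 7 * q.1 ^ 2 = N := by
  rw [DA, mem_filter, and_iff_right_iff_imp]
  rintro ⟨_, _, _, h⟩
  exact mem_boxZ_of (by nlinarith [sq_nonneg q.2]) (by nlinarith [sq_nonneg q.1])

lemma DA_odd {n : ℕ} {x w : ℤ} (h16 : (16 : ℤ) ∣ w - 3 * x)
    (h : w ^ 2 + 7 * x ^ 2 = ((32 * n + 16 : ℕ) : ℤ)) : ¬ (2 : ℤ) ∣ x := by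
  push_cast at h
  obtain ⟨c, hc⟩ := h16
  obtain rfl : w = 3 * x + 16 * c := by omega
  rintro ⟨d, rfl⟩
  have : 2 * (2 * d ^ 2 + 6 * d * c + 8 * c ^ 2) = 2 * (n : ℤ) + 1 := by nlinarith
  omega

lemma DA_card (n : ℕ) : (#(DA (32 * n + 16)) : ZMod 2) =
    if 12 ∣ n ∧ IsSquare (24 * (n / 12) + 1) then 1 else 0 := by
  rw [card_parity (DA (32 * n + 16)) (fun q => nrm ((3 * q.2 - q.1) / 8, (q.2 + 21 * q.1) / 8))]
  · have hfix : ∀ q : ℤ × ℤ, q ∈ (DA (32 * n + 16)).filter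
        (fun q => nrm ((3 * q.2 - q.1) / 8, (q.2 + 21 * q.1) / 8) = q) ↔
        0 < q.1 ∧ ¬ (3 : ℤ) ∣ q.1 ∧ q.2 = 3 * q.1 ∧ q.1 ^ 2 = 2 * n + 1 := by
      rintro ⟨x, w⟩
      rw [mem_filter, mem_DA]
      constructor
      · rintro ⟨⟨h0, h3, ⟨c, hc⟩, h⟩, hf⟩
        simp only at *
        unfold nrm at hf
        have hyx : w = 3 * x := by
          split_ifs at hf <;> simp only [Prod.mk.injEq] at hf <;> omega
        subst hyx
        refine ⟨h0, h3, rfl, ?_⟩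
        push_cast at h
        linarith
      · rintro ⟨h0, h3, h1, h⟩
        simp only at *
        subst h1
        refine ⟨⟨h0, h3, by simp, ?_⟩, ?_⟩
        · push_cast
          linarith
        · have e1 : (3 * (3 * x) - x) / 8 = x := by omega
          have e2 : (3 * x + 21 * x) / 8 = 3 * x := by omega
          simp [e1, e2, nrm, h0]
    split_ifs with hs
    · obtain ⟨⟨m, rfl⟩, s, hs⟩ := hs
      rw [Nat.mul_div_cancel_left _ (by norm_num)] at hs
      have hs0 : (0 : ℤ) < s := by
        rcases Nat.eq_zero_or_pos s with h | h
        · subst h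
          omega
        · exact_mod_cast h
      zify at hs
      rw [card_eq_one.2]
      · simp
      refine ⟨((s : ℤ), 3 * (s : ℤ)), ?_⟩
      ext ⟨x, y⟩
      rw [hfix, mem_singleton, Prod.mk.injEq]
      simp only
      push_cast
      constructor
      · rintro ⟨h0, h3, h1, h⟩
        have : x = s := pos_sq_inj h0 hs0 (by linarith)
        exact ⟨this, by omega⟩
      · rintro ⟨rfl, rfl⟩
        refine ⟨hs0, ?_, rfl, by linarith⟩
        intro h
        obtain ⟨k, hk⟩ := sq_form9 _ h
        rw [pow_two] at hk
        omega
    · rw [card_eq_zero.2]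
      · simp
      rw [eq_empty_iff_forall_notMem]
      rintro ⟨x, w⟩ hq
      rw [hfix] at hq
      obtain ⟨h0, h3, h1, h⟩ := hq
      simp only at *
      have h2 : ¬ (2 : ℤ) ∣ x := by
        intro h2
        obtain ⟨k, hk⟩ := sq_form4 _ h2
        omega
      obtain ⟨t, ht⟩ := sq_form24 x h2 h3
      refine hs ⟨by omega, x.natAbs, ?_⟩
      zify
      rw [← pow_two, sq_abs]
      omega
  · rintro ⟨x, w⟩ hq
    rw [mem_DA] at hq ⊢
    obtain ⟨h0, h3, ⟨c, hc⟩, h⟩ := hq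
    simp only at *
    have e1 : (3 * w - x) / 8 = x + 6 * c := by omega
    have e2 : (w + 21 * x) / 8 = 3 * x + 2 * c := by omega
    obtain rfl : w = 3 * x + 16 * c := by omega
    rw [e1, e2]
    unfold nrm
    split_ifs with hp
    · exact ⟨hp, by simp only; omega, ⟨-c, by ring⟩, by rw [← h]; ring⟩
    · simp only at hp ⊢
      exact ⟨by omega, by omega, ⟨c, by ring⟩, by rw [← h]; ring⟩
  · rintro ⟨x, w⟩ hq
    rw [mem_DA] at hq
    obtain ⟨h0, h3, ⟨c, hc⟩, h⟩ := hq
    simp only at *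
    have e1 : (3 * w - x) / 8 = x + 6 * c := by omega
    have e2 : (w + 21 * x) / 8 = 3 * x + 2 * c := by omega
    rw [e1, e2]
    unfold nrm
    simp only
    split_ifs <;> simp only [Prod.mk.injEq] at * <;> omega

open PowerSeries in
lemma formA_mod2 (n : ℕ) : coeff (4 * n + 1) (expand 21 (by norm_num) Eser * Pser) =
    coeff n (expand 12 (by norm_num) Eser) := by
  rw [Eser, Pser, expand_mk, expand_mk, coeff_mk_mul_mk, coeff_mk, ← DA_card]
  congr 1
  symm
  refine card_bij (fun q _ => ((7 * (q.1 ^ 2 - 1) / 8).toNat, ((q.2 ^ 2 - 1) / 8).toNat)) ?_ ?_ ?_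
  · rintro ⟨x, y⟩ hq
    rw [mem_DA] at hq
    obtain ⟨h0, h3, h16, h⟩ := hq
    simp only at *
    have hodd := DA_odd h16 h
    obtain ⟨s, hs⟩ := sq_form24 x hodd h3
    obtain ⟨t, ht⟩ := sq_form8 y (by omega)
    rw [hs, ht] at h ⊢
    have e1 : ((7 * (24 * s + 1 - 1) / 8 : ℤ)).toNat = 21 * s := by omega
    have e2 : (((8 * t + 1 - 1) / 8 : ℤ)).toNat = t := by omega
    rw [e1, e2, mem_filter, HasAntidiagonal.mem_antidiagonal]
    simp only
    refine ⟨by omega, ⟨⟨s, rfl⟩, x.natAbs, ?_⟩, ⟨y.natAbs, ?_⟩⟩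
    · rw [Nat.mul_div_cancel_left _ (by norm_num)]
      zify
      rw [← pow_two, sq_abs, hs]
    · zify
      rw [← pow_two, sq_abs, ht]
  · rintro ⟨x, y⟩ hq ⟨x', y'⟩ hq' heq
    rw [mem_DA] at hq hq'
    obtain ⟨h0, h3, h16, h⟩ := hq
    obtain ⟨h0', h3', h16', h'⟩ := hq'
    simp only [Prod.mk.injEq] at *
    have hodd := DA_odd h16 h
    have hodd' := DA_odd h16' h'
    obtain ⟨s, hs⟩ := sq_form24 x hodd h3
    obtain ⟨t, ht⟩ := sq_form8 y (by omega)
    obtain ⟨s', hs'⟩ := sq_form24 x' hodd' h3'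
    obtain ⟨t', ht'⟩ := sq_form8 y' (by omega)
    have hx : x = x' := pos_sq_inj h0 h0' (by omega)
    have hy : y ^ 2 = y' ^ 2 := by omega
    rcases sq_eq_sq_iff_eq_or_eq_neg.1 hy with hy | hy <;> omega
  · rintro ⟨i, j⟩ hij
    rw [mem_filter, HasAntidiagonal.mem_antidiagonal] at hij
    obtain ⟨hn, ⟨⟨t, rfl⟩, s, hs⟩, ⟨r, hr⟩⟩ := hij
    simp only at *
    rw [Nat.mul_div_cancel_left _ (by norm_num)] at hs
    have hs' : (s : ℤ) ^ 2 = 24 * t + 1 := by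
      zify at hs
      linarith
    have hr' : (r : ℤ) ^ 2 = 8 * j + 1 := by
      zify at hr
      linarith
    have hs3 : ¬ (3 : ℤ) ∣ s := by
      intro h
      obtain ⟨k, hk⟩ := sq_form9 _ h
      omega
    have hs2 : ¬ (2 : ℤ) ∣ s := by
      intro h
      obtain ⟨k, hk⟩ := sq_form4 _ h
      omega
    have hr2 : ¬ (2 : ℤ) ∣ r := by
      intro h
      obtain ⟨k, hk⟩ := sq_form4 _ h
      omega
    have hs0 : (0 : ℤ) < s := by omega
    obtain ⟨y, hy, hy3⟩ : ∃ y : ℤ, y ^ 2 = r ^ 2 ∧ (16 : ℤ) ∣ y - 3 * s := by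
      obtain ⟨a, ha⟩ : (2 : ℤ) ∣ r - 3 * s := by omega
      obtain ⟨b, hb⟩ : (2 : ℤ) ∣ r + 3 * s := by omega
      have hab : (8 : ℤ) ∣ a * b := by
        have h4 : 4 * (a * b) = (r : ℤ) ^ 2 - 9 * s ^ 2 := by
          linear_combination -(r + 3 * s : ℤ) * ha - 2 * a * hb
        generalize a * b = ab at *
        omega
      have cop : ∀ z : ℤ, ¬ (2 : ℤ) ∣ z → IsCoprime (8 : ℤ) z := by
        intro z hz
        have : IsCoprime ((2 : ℤ) ^ 3) z :=
          IsCoprime.pow_left ((Int.prime_two.coprime_iff_not_dvd).2 hz)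
        norm_num at this
        exact this
      by_cases h : (2 : ℤ) ∣ a
      · have : (8 : ℤ) ∣ a := (cop b (by omega)).dvd_of_dvd_mul_right hab
        exact ⟨r, rfl, by omega⟩
      · have : (8 : ℤ) ∣ b := (cop a h).dvd_of_dvd_mul_left hab
        exact ⟨-r, by ring, by omega⟩
    refine ⟨(s, y), ?_, ?_⟩
    · rw [mem_DA]
      simp only
      refine ⟨hs0, hs3, hy3, ?_⟩
      push_cast
      omega
    · simp only [Prod.mk.injEq]
      omega

end formA

section combine
open Finset

open PowerSeries in
lemma coeff_dissect (P F : PowerSeries (ZMod 2)) (n : ℕ) :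
    coeff (4 * n + 1) (P * expand 4 (by norm_num) F) =
    coeff n ((PowerSeries.mk fun k => coeff (4 * k + 1) P) * F) := by
  rw [coeff_mul, coeff_mul]
  symm
  refine sum_of_injOn (fun a => (4 * a.1 + 1, 4 * a.2)) ?_ ?_ ?_ ?_
  · rintro ⟨a, b⟩ - ⟨c, d⟩ - h
    simp only [Prod.mk.injEq] at h ⊢
    omega
  · rintro ⟨a, b⟩ h
    simp only [mem_coe, HasAntidiagonal.mem_antidiagonal] at h ⊢
    omega
  · rintro ⟨a, b⟩ h h'
    rw [HasAntidiagonal.mem_antidiagonal] at h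
    rw [coeff_expand_of_not_dvd, mul_zero]
    rintro ⟨c, rfl⟩
    apply h'
    simp only at h
    refine ⟨(n - c, c), ?_, ?_⟩
    · simp only [mem_coe, HasAntidiagonal.mem_antidiagonal]
      omega
    · simp only [Prod.mk.injEq, and_true]
      omega
  · rintro ⟨a, b⟩ -
    simp only [coeff_mk, coeff_expand_mul]

open PowerSeries in
lemma b21_series : (PowerSeries.mk fun n => (b21 (4 * n + 1) : ZMod 2)) =
    Gser * expand 3 (by norm_num) Eser := by
  have hE0 : Eser ≠ 0 := by
    intro h
    have := congrArg (coeff 0) h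
    rw [Eser, coeff_mk] at this
    simp at this
  apply mul_right_cancel₀ hE0
  have h1 : (PowerSeries.mk fun n => (b21 (4 * n + 1) : ZMod 2)) * Eser =
      expand 12 (by norm_num) Eser := by
    ext n
    have hd := coeff_dissect (PowerSeries.mk fun n => (b21 n : ZMod 2)) Eser n
    simp only [coeff_mk] at hd
    rw [← hd, ← pow_four_eq_expand, ← formA_mod2, ← E_cube, ← b21_mul]
    congr 1
    ring
  rw [h1, show Gser * expand 3 (by norm_num) Eser * Eser =
    (Eser * Gser) * expand 3 (by norm_num) Eser by ring, cubic_mod2, ← E_cube, ← map_mul,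
    show Eser ^ 3 * Eser = Eser ^ 4 by ring, pow_four_eq_expand,
    ← expand_mul 3 (by norm_num) 4 (by norm_num)]

/-- Representations of `m` by `3y^2+8z^2` with `3 ∤ y`, both positive. -/
noncomputable def Rset (m : ℕ) : Finset (ℤ × ℤ) :=
  (boxZ m).filter fun q => 0 < q.1 ∧ 0 < q.2 ∧ ¬ (3 : ℤ) ∣ q.1 ∧ 3 * q.1 ^ 2 + 8 * q.2 ^ 2 = m

lemma mem_Rset {m : ℕ} {q : ℤ × ℤ} : q ∈ Rset m ↔
    0 < q.1 ∧ 0 < q.2 ∧ ¬ (3 : ℤ) ∣ q.1 ∧ 3 * q.1 ^ 2 + 8 * q.2 ^ 2 = m := by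
  rw [Rset, mem_filter, and_iff_right_iff_imp]
  rintro ⟨_, _, _, h⟩
  exact mem_boxZ_of (by nlinarith [sq_nonneg q.2, sq_nonneg q.1])
    (by nlinarith [sq_nonneg q.1, sq_nonneg q.2])

open PowerSeries in
lemma b21_parity (n : ℕ) : (b21 (4 * n + 1) : ZMod 2) = #(Rset (24 * n + 11)) := by
  have h := congrArg (coeff n) b21_series
  rw [coeff_mk] at h
  rw [h, Gser, Eser, expand_mk, coeff_mk_mul_mk]
  congr 1
  symm
  refine card_bij (fun q _ => (((q.2 ^ 2 - 1) / 3).toNat, ((q.1 ^ 2 - 1) / 8).toNat)) ?_ ?_ ?_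
  · rintro ⟨y, z⟩ hq
    rw [mem_Rset] at hq
    obtain ⟨h0, h0', h3, h⟩ := hq
    simp only at *
    push_cast at h
    have hy2 : ¬ (2 : ℤ) ∣ y := by
      intro h2
      obtain ⟨k, hk⟩ := sq_form4 _ h2
      omega
    have hz3 : ¬ (3 : ℤ) ∣ z := by
      intro h2
      obtain ⟨k, hk⟩ := sq_form9 _ h2
      omega
    obtain ⟨s, hs⟩ := sq_form24 y hy2 h3
    obtain ⟨t, ht⟩ := sq_form3 z hz3
    rw [hs, ht] at h ⊢
    have e1 : (((24 * s + 1 - 1) / 8 : ℤ)).toNat = 3 * s := by omega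
    have e2 : (((3 * t + 1 - 1) / 3 : ℤ)).toNat = t := by omega
    rw [e1, e2, mem_filter, HasAntidiagonal.mem_antidiagonal]
    simp only
    refine ⟨by omega, ⟨z.natAbs, ?_⟩, ⟨s, rfl⟩, ⟨y.natAbs, ?_⟩⟩
    · zify
      rw [← pow_two, sq_abs, ht]
    · rw [Nat.mul_div_cancel_left _ (by norm_num)]
      zify
      rw [← pow_two, sq_abs, hs]
  · have aux : ∀ y z : ℤ, 3 * y ^ 2 + 8 * z ^ 2 = ((24 * n + 11 : ℕ) : ℤ) → ¬ (3 : ℤ) ∣ y →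
        ∃ s t : ℕ, y ^ 2 = 24 * s + 1 ∧ z ^ 2 = 3 * t + 1 := by
      intro y z h h3
      push_cast at h
      have hy2 : ¬ (2 : ℤ) ∣ y := by
        intro h2
        obtain ⟨k, hk⟩ := sq_form4 _ h2
        omega
      have hz3 : ¬ (3 : ℤ) ∣ z := by
        intro h2
        obtain ⟨k, hk⟩ := sq_form9 _ h2
        omega
      obtain ⟨s, hs⟩ := sq_form24 y hy2 h3
      obtain ⟨t, ht⟩ := sq_form3 z hz3
      exact ⟨s, t, hs, ht⟩
    rintro ⟨x, y⟩ hq ⟨x', y'⟩ hq' heq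
    rw [mem_Rset] at hq hq'
    obtain ⟨h0, h1, h3, h⟩ := hq
    obtain ⟨h0', h1', h3', h'⟩ := hq'
    simp only [Prod.mk.injEq] at *
    obtain ⟨s, t, hs, ht⟩ := aux x y h h3
    obtain ⟨s', t', hs', ht'⟩ := aux x' y' h' h3'
    exact ⟨pos_sq_inj h0 h0' (by omega), pos_sq_inj h1 h1' (by omega)⟩
  · rintro ⟨i, j⟩ hij
    rw [mem_filter, HasAntidiagonal.mem_antidiagonal] at hij
    obtain ⟨hn, ⟨r, hr⟩, ⟨t, rfl⟩, ⟨s, hs⟩⟩ := hij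
    simp only at *
    rw [Nat.mul_div_cancel_left _ (by norm_num)] at hs
    have hs' : (s : ℤ) ^ 2 = 24 * t + 1 := by
      zify at hs
      linarith
    have hr' : (r : ℤ) ^ 2 = 3 * i + 1 := by
      zify at hr
      linarith
    have hs3 : ¬ (3 : ℤ) ∣ s := by
      intro h
      obtain ⟨k, hk⟩ := sq_form9 _ h
      omega
    have hs0 : (s : ℤ) ≠ 0 := by omega
    have hr0 : (r : ℤ) ≠ 0 := by
      intro h
      rw [h] at hr'
      omega
    refine ⟨(s, r), ?_, ?_⟩
    · rw [mem_Rset]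
      simp only
      refine ⟨by omega, by omega, hs3, ?_⟩
      push_cast
      omega
    · simp only [Prod.mk.injEq]
      omega

end combine

section thue

lemma exists_thue (p : ℕ) (hp : p.Prime) (s : ZMod p) (hs : s * s = -6) :
    ∃ a b : ℤ, a ^ 2 < p ∧ b ^ 2 < p ∧ ¬ (a = 0 ∧ b = 0) ∧ (p : ℤ) ∣ a ^ 2 + 6 * b ^ 2 := by
  haveI : Fact p.Prime := ⟨hp⟩
  set r := Nat.sqrt p with hr
  have hr1 : r ^ 2 < p := by
    have h1 : r ^ 2 ≤ p := Nat.sqrt_le' p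
    rcases h1.lt_or_eq with h | h
    · exact h
    · exact absurd (h ▸ hp) (Nat.Prime.not_prime_pow (le_refl 2))
  have hr2 : p < (r + 1) ^ 2 := Nat.lt_succ_sqrt' p
  let S := Finset.range (r + 1) ×ˢ Finset.range (r + 1)
  have hcard : (Finset.univ : Finset (ZMod p)).card < S.card := by
    rw [Finset.card_univ, ZMod.card, Finset.card_product, Finset.card_range, ← pow_two]
    exact hr2
  obtain ⟨⟨a1, b1⟩, h1, ⟨a2, b2⟩, h2, hne, heq⟩ :=
    Finset.exists_ne_map_eq_of_card_lt_of_maps_to hcard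
      (f := fun q : ℕ × ℕ => (q.1 : ZMod p) - s * q.2) (fun _ _ => Finset.mem_univ _)
  simp only [S, Finset.mem_product, Finset.mem_range] at h1 h2
  have bound : ∀ x y : ℕ, x < r + 1 → y < r + 1 → ((x : ℤ) - y) ^ 2 < p := by
    intro x y hx hy
    have : ((x : ℤ) - y) ^ 2 ≤ (r : ℤ) ^ 2 := by
      apply sq_le_sq'
      · omega
      · omega
    zify at hr1
    linarith
  refine ⟨a1 - a2, b1 - b2, bound _ _ h1.1 h2.1, bound _ _ h1.2 h2.2, ?_, ?_⟩
  · rintro ⟨ha, hb⟩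
    apply hne
    rw [Prod.mk.injEq]
    omega
  · rw [← ZMod.intCast_zmod_eq_zero_iff_dvd]
    simp only at heq
    push_cast
    have h3 : (a1 : ZMod p) - a2 = s * (b1 - b2) := by linear_combination heq
    rw [h3]
    linear_combination ((b1 : ZMod p) - b2) ^ 2 * hs

lemma not_dvd_two {p : ℕ} (hp5 : 5 ≤ p) : ¬ (p : ℤ) ∣ 2 := fun h => by
  have := Int.le_of_dvd (by norm_num) h
  omega

lemma not_dvd_three {p : ℕ} (hp5 : 5 ≤ p) : ¬ (p : ℤ) ∣ 3 := fun h => by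
  have := Int.le_of_dvd (by norm_num) h
  omega

lemma sq_lt_dvd {p : ℕ} {a : ℤ} (h : a ^ 2 < p) (hd : (p : ℤ) ∣ a) : a = 0 := by
  by_contra h0
  have h1 : (p : ℤ) ≤ |a| := Int.le_of_dvd (abs_pos.2 h0) ((dvd_abs _ _).2 hd)
  have h2 : 1 ≤ |a| := Int.one_le_abs h0
  have h3 := sq_abs a
  nlinarith

lemma exists_uv (p : ℕ) (hp : p.Prime) (hp5 : 5 ≤ p) (s : ZMod p) (hs : s * s = -6) :
    ∃ u v : ℤ, u ^ 2 + 24 * v ^ 2 = (p : ℤ) ^ 2 ∧ ¬ (p : ℤ) ∣ v := by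
  have hpz : Prime (p : ℤ) := Nat.prime_iff_prime_int.1 hp
  by_cases hp55 : p = 5
  · subst hp55
    exact ⟨1, 1, by norm_num, by norm_num⟩
  obtain ⟨a, b, ha, hb, hab, c, hc⟩ := exists_thue p hp s hs
  have hn2 := not_dvd_two hp5
  have hn3 := not_dvd_three hp5
  have hpa : ¬ (p : ℤ) ∣ a := by
    intro h
    have h0 := sq_lt_dvd ha h
    subst h0
    have h1 : (p : ℤ) ∣ 2 * (3 * b ^ 2) := ⟨c, by linarith⟩
    have h2 := hpz.dvd_of_dvd_pow (((hpz.dvd_or_dvd ((hpz.dvd_or_dvd h1).resolve_left hn2))).resolve_left hn3)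
    exact hab ⟨rfl, sq_lt_dvd hb h2⟩
  have hpb : ¬ (p : ℤ) ∣ b := by
    intro h
    have h0 := sq_lt_dvd hb h
    subst h0
    have h1 : (p : ℤ) ∣ a ^ 2 := ⟨c, by linarith⟩
    exact hpa (hpz.dvd_of_dvd_pow h1)
  have hpV : ¬ (p : ℤ) ∣ a * b := fun h => (hpz.dvd_or_dvd h).elim hpa hpb
  have hUV : (a ^ 2 - 6 * b ^ 2) ^ 2 + 24 * (a * b) ^ 2 = c ^ 2 * (p : ℤ) ^ 2 := by
    have : c ^ 2 * (p : ℤ) ^ 2 = (p * c) ^ 2 := by ring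
    rw [this, ← hc]
    ring
  have hp0 : (0 : ℤ) < p := by omega
  have hc0 : 0 < c := by
    by_contra h
    have h1 : (p : ℤ) * c ≤ 0 := by nlinarith
    have h2 : a = 0 := by nlinarith [sq_nonneg a, sq_nonneg b]
    exact hpa (h2 ▸ dvd_zero _)
  have hc7 : c < 7 := by
    by_contra h
    have h1 : (p : ℤ) * 7 ≤ p * c := by nlinarith
    nlinarith
  have fin : ∀ U V : ℤ, a ^ 2 - 6 * b ^ 2 = c * U → a * b = c * V →
      ∃ u v : ℤ, u ^ 2 + 24 * v ^ 2 = (p : ℤ) ^ 2 ∧ ¬ (p : ℤ) ∣ v := by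
    intro U V hU hV
    refine ⟨U, V, ?_, fun h => hpV (hV ▸ Dvd.dvd.mul_left h c)⟩
    rw [hU, hV] at hUV
    have hc2 : c ^ 2 ≠ 0 := by positivity
    apply mul_left_cancel₀ hc2
    linarith
  have p2 : Prime (2 : ℤ) := Int.prime_two
  have p3 : Prime (3 : ℤ) := Int.prime_three
  have p5 : Prime (5 : ℤ) := by norm_num
  have d2 : (2 : ℤ) ∣ c → (2 : ℤ) ∣ a := by
    rintro ⟨k, rfl⟩
    exact p2.dvd_of_dvd_pow (n := 2) ⟨p * k - 3 * b ^ 2, by linarith⟩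
  have d3 : (3 : ℤ) ∣ c → (3 : ℤ) ∣ a := by
    rintro ⟨k, rfl⟩
    exact p3.dvd_of_dvd_pow (n := 2) ⟨p * k - 2 * b ^ 2, by linarith⟩
  interval_cases c
  · exact fin (a ^ 2 - 6 * b ^ 2) (a * b) (by ring) (by ring)
  · obtain ⟨e, rfl⟩ := d2 (by norm_num)
    exact fin (2 * e ^ 2 - 3 * b ^ 2) (e * b) (by ring) (by ring)
  · obtain ⟨e, rfl⟩ := d3 (by norm_num)
    exact fin (3 * e ^ 2 - 2 * b ^ 2) (e * b) (by ring) (by ring)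
  · obtain ⟨e, rfl⟩ := d2 (by norm_num)
    have hb2 : (2 : ℤ) ∣ b := by
      have : (2 : ℤ) ∣ 3 * b ^ 2 := ⟨p - e ^ 2, by linarith⟩
      exact p2.dvd_of_dvd_pow ((p2.dvd_or_dvd this).resolve_left (by norm_num))
    obtain ⟨f, rfl⟩ := hb2
    exact fin (e ^ 2 - 6 * f ^ 2) (e * f) (by ring) (by ring)
  · set U := a ^ 2 - 6 * b ^ 2 with hU
    set V := a * b with hV
    have h5p : ¬ (5 : ℤ) ∣ p := by
      intro h
      have : 5 ∣ p := by exact_mod_cast h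
      exact hp55 ((Nat.prime_dvd_prime_iff_eq (by norm_num) hp).1 this).symm
    have hp5' : ¬ (p : ℤ) ∣ 5 := by
      intro h
      have : p ∣ 5 := by exact_mod_cast h
      exact hp55 ((Nat.prime_dvd_prime_iff_eq hp (by norm_num)).1 this)
    have h5V : ¬ (5 : ℤ) ∣ V := by
      intro h
      have hboth : (5 : ℤ) ∣ a ∧ (5 : ℤ) ∣ b := by
        rcases p5.dvd_or_dvd h with h | h
        · refine ⟨h, ?_⟩
          obtain ⟨e, he⟩ := h
          have : (5 : ℤ) ∣ 6 * b ^ 2 := ⟨p - 5 * e ^ 2, by rw [he] at hc; linarith⟩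
          exact p5.dvd_of_dvd_pow ((p5.dvd_or_dvd this).resolve_left (by norm_num))
        · refine ⟨?_, h⟩
          obtain ⟨e, he⟩ := h
          exact p5.dvd_of_dvd_pow (n := 2) ⟨p - 30 * e ^ 2, by rw [he] at hc; linarith⟩
      obtain ⟨⟨e, he⟩, ⟨f, hf⟩⟩ := hboth
      apply h5p
      refine ⟨e ^ 2 + 6 * f ^ 2, ?_⟩
      rw [he, hf] at hc
      linarith
    have main : ∀ ε : ℤ, ε ^ 2 = 1 → (5 : ℤ) ∣ U + ε * V →
        ∃ u v : ℤ, u ^ 2 + 24 * v ^ 2 = (p : ℤ) ^ 2 ∧ ¬ (p : ℤ) ∣ v := by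
      intro ε hε h5
      have hn5 : ¬ (5 : ℤ) ∣ U - ε * V := by
        intro h
        have h1 : (5 : ℤ) ∣ 2 * (ε * (ε * V)) := by
          have := dvd_sub h5 h
          have h2 := Dvd.dvd.mul_left this ε
          have e : 2 * (ε * (ε * V)) = ε * (U + ε * V - (U - ε * V)) := by ring
          rw [e]
          exact h2
        rw [← mul_assoc ε, ← pow_two, hε, one_mul] at h1
        exact h5V ((p5.dvd_or_dvd h1).resolve_left (by norm_num))
      have h25 : (5 : ℤ) ^ 2 ∣ U + ε * V := by
        have hcop : IsCoprime ((5 : ℤ) ^ 2) (U - ε * V) :=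
          IsCoprime.pow_left (p5.coprime_iff_not_dvd.2 hn5)
        refine hcop.dvd_of_dvd_mul_right ⟨p ^ 2 - V ^ 2, ?_⟩
        linear_combination hUV - V ^ 2 * hε
      obtain ⟨w, hw⟩ := h25
      refine ⟨ε * w - V, w, ?_, ?_⟩
      · have hUe : U = 25 * w - ε * V := by linarith
        rw [hUe] at hUV
        have : (25 : ℤ) * ((ε * w - V) ^ 2 + 24 * w ^ 2) = 25 * (p : ℤ) ^ 2 := by
          linear_combination hUV + (25 * w ^ 2 - V ^ 2) * hε
        linarith
      · rintro ⟨k, hk⟩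
        have : (p : ℤ) ∣ 5 * (5 * V ^ 2) := by
          have hUe : U = 25 * (p * k) - ε * V := by rw [← hk]; linarith
          rw [hUe] at hUV
          refine ⟨25 * p - 625 * p * k ^ 2 + 50 * k * ε * V, ?_⟩
          linear_combination hUV - V ^ 2 * hε
        exact hpV (hpz.dvd_of_dvd_pow ((hpz.dvd_or_dvd
          ((hpz.dvd_or_dvd this).resolve_left hp5')).resolve_left hp5'))
    have h5 : (5 : ℤ) ∣ (U + 1 * V) * (U + -1 * V) := by
      refine ⟨5 * (p ^ 2 - V ^ 2), ?_⟩
      linear_combination hUV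
    rcases p5.dvd_or_dvd h5 with h | h
    · exact main 1 (by norm_num) h
    · exact main (-1) (by norm_num) h
  · obtain ⟨e, rfl⟩ := d2 (by norm_num)
    have he := d3 (by norm_num)
    obtain ⟨f, rfl⟩ : (3 : ℤ) ∣ e := by omega
    exact fin (6 * f ^ 2 - b ^ 2) (f * b) (by ring) (by ring)

end thue

section reps
open Finset

lemma nrm_spec (q : ℤ × ℤ) (h : q.1 ≠ 0) :
    ∃ ε : ℤ, (ε = 1 ∨ ε = -1) ∧ nrm q = (ε * q.1, ε * q.2) ∧ 0 < ε * q.1 := by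
  unfold nrm
  split_ifs with h0
  · exact ⟨1, Or.inl rfl, by simp, by simpa using h0⟩
  · refine ⟨-1, Or.inr rfl, by simp, ?_⟩
    omega

lemma dvd_eps {ε a b : ℤ} (hε : ε = 1 ∨ ε = -1) : a ∣ ε * b ↔ a ∣ b := by
  rcases hε with rfl | rfl <;> simp

lemma eps_sq {ε : ℤ} (hε : ε = 1 ∨ ε = -1) : ε ^ 2 = 1 := by
  rcases hε with rfl | rfl <;> norm_num

lemma dvd_cancel8 {p : ℕ} (hp : p.Prime) (hp5 : 5 ≤ p) {z : ℤ} (h : (p : ℤ) ∣ 8 * z) :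
    (p : ℤ) ∣ z := by
  have hpz : Prime (p : ℤ) := Nat.prime_iff_prime_int.1 hp
  refine (hpz.dvd_or_dvd h).resolve_left fun h8 => not_dvd_two hp5 ?_
  exact hpz.dvd_of_dvd_pow (n := 3) (by norm_num; exact h8)

lemma dvd_cancel2 {p : ℕ} (hp : p.Prime) (hp5 : 5 ≤ p) {z : ℤ} (h : (p : ℤ) ∣ 2 * z) :
    (p : ℤ) ∣ z :=
  ((Nat.prime_iff_prime_int.1 hp).dvd_or_dvd h).resolve_left (not_dvd_two hp5)

lemma dvd_cancel3 {p : ℕ} (hp : p.Prime) (hp5 : 5 ≤ p) {z : ℤ} (h : (p : ℤ) ∣ 3 * z) :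
    (p : ℤ) ∣ z :=
  ((Nat.prime_iff_prime_int.1 hp).dvd_or_dvd h).resolve_left (not_dvd_three hp5)

/-- Representations whose first coordinate is prime to `p`. -/
noncomputable def Rp (p m : ℕ) : Finset (ℤ × ℤ) := (Rset m).filter fun q => ¬ (p : ℤ) ∣ q.1

lemma mem_Rp {p m : ℕ} {q : ℤ × ℤ} : q ∈ Rp p m ↔
    (0 < q.1 ∧ 0 < q.2 ∧ ¬ (3 : ℤ) ∣ q.1 ∧ 3 * q.1 ^ 2 + 8 * q.2 ^ 2 = m) ∧ ¬ (p : ℤ) ∣ q.1 := by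
  rw [Rp, mem_filter, mem_Rset]

lemma dvd_snd {p : ℕ} (hp : p.Prime) (hp5 : 5 ≤ p) {y z m : ℤ} (h : 3 * y ^ 2 + 8 * z ^ 2 = m)
    (hm : (p : ℤ) ∣ m) (hy : (p : ℤ) ∣ y) : (p : ℤ) ∣ z := by
  have hpz : Prime (p : ℤ) := Nat.prime_iff_prime_int.1 hp
  obtain ⟨a, rfl⟩ := hy
  obtain ⟨b, rfl⟩ := hm
  refine hpz.dvd_of_dvd_pow (n := 2) (dvd_cancel8 hp hp5 ⟨b - 3 * p * a ^ 2, ?_⟩)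
  linarith

lemma three_not_dvd {p : ℕ} (hp : p.Prime) (hp5 : 5 ≤ p) : ¬ (3 : ℤ) ∣ p := by
  intro h
  have : 3 ∣ p := by exact_mod_cast h
  have := (Nat.prime_dvd_prime_iff_eq (by norm_num) hp).1 this
  omega

lemma two_not_dvd {p : ℕ} (hp : p.Prime) (hp5 : 5 ≤ p) : ¬ (2 : ℤ) ∣ p := by
  intro h
  have : 2 ∣ p := by exact_mod_cast h
  have := (Nat.prime_dvd_prime_iff_eq (by norm_num) hp).1 this
  omega

lemma card_Rset_sq {p : ℕ} (hp : p.Prime) (hp5 : 5 ≤ p) (m : ℕ) :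
    #(Rset (p ^ 2 * m)) = #(Rp p (p ^ 2 * m)) + #(Rset m) := by
  have hp0 : (0 : ℤ) < p := by omega
  have p3 : Prime (3 : ℤ) := Int.prime_three
  have h := card_filter_add_card_filter_not (s := Rset (p ^ 2 * m)) (fun q => ¬ (p : ℤ) ∣ q.1)
  rw [← h, Rp]
  congr 1
  symm
  refine card_bij (fun q _ => (p * q.1, p * q.2)) ?_ ?_ ?_
  · rintro ⟨y, z⟩ hq
    rw [mem_Rset] at hq
    obtain ⟨h1, h2, h3, h4⟩ := hq
    simp only [mem_filter, mem_Rset, not_not] at *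
    refine ⟨⟨by positivity, by positivity, fun hd => ?_, ?_⟩, dvd_mul_right _ _⟩
    · exact (p3.dvd_or_dvd hd).elim (three_not_dvd hp hp5) h3
    · push_cast
      rw [← h4]
      ring
  · rintro ⟨y, z⟩ - ⟨y', z'⟩ - h
    simp only [Prod.mk.injEq] at *
    exact ⟨mul_left_cancel₀ hp0.ne' h.1, mul_left_cancel₀ hp0.ne' h.2⟩
  · rintro ⟨y, z⟩ hq
    simp only [mem_filter, mem_Rset, not_not] at hq
    obtain ⟨⟨h1, h2, h3, h4⟩, hy⟩ := hq
    have hz := dvd_snd hp hp5 h4 (by push_cast; exact ⟨p * m, by ring⟩) hy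
    obtain ⟨a, rfl⟩ := hy
    obtain ⟨b, rfl⟩ := hz
    refine ⟨(a, b), ?_, rfl⟩
    rw [mem_Rset]
    refine ⟨pos_of_mul_pos_right h1 hp0.le, pos_of_mul_pos_right h2 hp0.le,
      fun hd => h3 (Dvd.dvd.mul_left hd _), ?_⟩
    have : (p : ℤ) ^ 2 ≠ 0 := by positivity
    apply mul_left_cancel₀ this
    push_cast at h4
    simp only
    linarith

lemma card_Rset_base {p : ℕ} (hp : p.Prime) (hp5 : 5 ≤ p) (m : ℕ) (h1 : p ∣ m)
    (h2 : ¬ p ^ 2 ∣ m) : #(Rset m) = #(Rp p m) := by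
  rw [Rp, filter_true_of_mem]
  rintro ⟨y, z⟩ hq hy
  rw [mem_Rset] at hq
  obtain ⟨-, -, -, h4⟩ := hq
  simp only at *
  have hz := dvd_snd hp hp5 h4 (by exact_mod_cast h1) hy
  apply h2
  obtain ⟨a, rfl⟩ := hy
  obtain ⟨b, rfl⟩ := hz
  have : (p : ℤ) ^ 2 ∣ m := ⟨3 * a ^ 2 + 8 * b ^ 2, by rw [← h4]; ring⟩
  exact_mod_cast this

lemma u_not_dvd {p : ℕ} (hp : p.Prime) (hp5 : 5 ≤ p) {u v : ℤ}
    (huv : u ^ 2 + 24 * v ^ 2 = (p : ℤ) ^ 2) (hv : ¬ (p : ℤ) ∣ v) : ¬ (p : ℤ) ∣ u := by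
  rintro ⟨a, rfl⟩
  apply hv
  refine (Nat.prime_iff_prime_int.1 hp).dvd_of_dvd_pow (n := 2)
    (dvd_cancel3 hp hp5 (dvd_cancel8 hp hp5 ⟨p - p * a ^ 2, ?_⟩))
  linarith

lemma dart_lift {p : ℕ} (hp : p.Prime) (hp5 : 5 ≤ p) {u v Y Z M : ℤ}
    (huv : u ^ 2 + 24 * v ^ 2 = (p : ℤ) ^ 2) (hv : ¬ (p : ℤ) ∣ v) (hY : ¬ (p : ℤ) ∣ Y)
    (hm : 3 * Y ^ 2 + 8 * Z ^ 2 = p ^ 2 * M) (hd : (p : ℤ) ∣ u * Y - 8 * v * Z) :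
    ∃ A B : ℤ, u * Y - 8 * v * Z = p ^ 2 * A ∧ u * Z + 3 * v * Y = p ^ 2 * B ∧
      Y = u * A + 8 * v * B ∧ Z = u * B - 3 * v * A ∧ 3 * A ^ 2 + 8 * B ^ 2 = M := by
  have hpz : Prime (p : ℤ) := Nat.prime_iff_prime_int.1 hp
  have hu := u_not_dvd hp hp5 huv hv
  have hp0 : (0 : ℤ) < p := by omega
  have hp2 : (p : ℤ) ^ 2 ≠ 0 := by positivity
  have hn : ¬ (p : ℤ) ∣ u * Y + 8 * v * Z := by
    intro h
    have h2 : (p : ℤ) ∣ 2 * (u * Y) := by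
      have e : 2 * (u * Y) = (u * Y - 8 * v * Z) + (u * Y + 8 * v * Z) := by ring
      rw [e]
      exact dvd_add hd h
    exact (hpz.dvd_or_dvd (dvd_cancel2 hp hp5 h2)).elim hu hY
  have h1 : (p : ℤ) ^ 2 ∣ u * Y - 8 * v * Z := by
    have hcop : IsCoprime ((p : ℤ) ^ 2) (u * Y + 8 * v * Z) :=
      IsCoprime.pow_left (hpz.coprime_iff_not_dvd.2 hn)
    refine hcop.dvd_of_dvd_mul_right ⟨Y ^ 2 - 8 * v ^ 2 * M, ?_⟩
    linear_combination Y ^ 2 * huv - 8 * v ^ 2 * hm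
  obtain ⟨A, hA⟩ := h1
  have h2 : (p : ℤ) ^ 2 ∣ u * Z + 3 * v * Y := by
    have hcop : IsCoprime ((p : ℤ) ^ 2) (8 * v) :=
      IsCoprime.pow_left (hpz.coprime_iff_not_dvd.2 fun h => hv (dvd_cancel8 hp hp5 h))
    refine hcop.dvd_of_dvd_mul_left ⟨Y - u * A, ?_⟩
    linear_combination Y * huv - u * hA
  obtain ⟨B, hB⟩ := h2
  have eY : Y = u * A + 8 * v * B := by
    apply mul_left_cancel₀ hp2
    linear_combination u * hA + 8 * v * hB - Y * huv
  have eZ : Z = u * B - 3 * v * A := by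
    apply mul_left_cancel₀ hp2
    linear_combination u * hB - 3 * v * hA - Z * huv
  refine ⟨A, B, hA, hB, eY, eZ, ?_⟩
  apply mul_left_cancel₀ hp2
  rw [← hm, eY, eZ]
  linear_combination (-(3 * A ^ 2 + 8 * B ^ 2)) * huv

/-- Oriented representations. -/
noncomputable def Dart (p : ℕ) (u v : ℤ) (m : ℕ) : Finset (ℤ × ℤ) :=
  (boxZ m).filter fun q => 0 < q.1 ∧ ¬ (p : ℤ) ∣ q.1 ∧ ¬ (3 : ℤ) ∣ q.1 ∧
    3 * q.1 ^ 2 + 8 * q.2 ^ 2 = m ∧ (p : ℤ) ∣ u * q.1 - 8 * v * q.2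

lemma mem_Dart {p : ℕ} {u v : ℤ} {m : ℕ} {q : ℤ × ℤ} : q ∈ Dart p u v m ↔
    0 < q.1 ∧ ¬ (p : ℤ) ∣ q.1 ∧ ¬ (3 : ℤ) ∣ q.1 ∧
    3 * q.1 ^ 2 + 8 * q.2 ^ 2 = m ∧ (p : ℤ) ∣ u * q.1 - 8 * v * q.2 := by
  rw [Dart, mem_filter, and_iff_right_iff_imp]
  rintro ⟨_, _, _, h, _⟩
  exact mem_boxZ_of (by nlinarith [sq_nonneg q.2, sq_nonneg q.1])
    (by nlinarith [sq_nonneg q.1, sq_nonneg q.2])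

lemma card_Dart {p : ℕ} (hp : p.Prime) (hp5 : 5 ≤ p) {u v : ℤ}
    (huv : u ^ 2 + 24 * v ^ 2 = (p : ℤ) ^ 2) (hv : ¬ (p : ℤ) ∣ v) (m : ℕ) (hm : p ∣ m) :
    #(Dart p u v m) = #(Rp p m) := by
  have hpz : Prime (p : ℤ) := Nat.prime_iff_prime_int.1 hp
  have hu := u_not_dvd hp hp5 huv hv
  have hmz : (p : ℤ) ∣ m := by exact_mod_cast hm
  refine card_bij (fun q _ => (q.1, |q.2|)) ?_ ?_ ?_
  · rintro ⟨y, z⟩ hq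
    rw [mem_Dart] at hq
    rw [mem_Rp]
    obtain ⟨h1, h2, h3, h4, h5⟩ := hq
    simp only [sq_abs, abs_pos] at *
    refine ⟨⟨h1, ?_, h3, h4⟩, h2⟩
    rintro rfl
    apply h2
    refine hpz.dvd_of_dvd_pow (n := 2) (dvd_cancel3 hp hp5 ?_)
    rw [← h4] at hmz
    simpa using hmz
  · rintro ⟨y, z⟩ hq ⟨y', z'⟩ hq' h
    rw [mem_Dart] at hq hq'
    simp only [Prod.mk.injEq] at *
    obtain ⟨rfl, h⟩ := h
    refine ⟨rfl, ?_⟩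
    rcases abs_eq_abs.1 h with h | h
    · exact h
    · exfalso
      subst h
      have h2 : (p : ℤ) ∣ 2 * (u * y) := by
        have e : 2 * (u * y) = (u * y - 8 * v * -z') + (u * y - 8 * v * z') := by ring
        rw [e]
        exact dvd_add hq.2.2.2.2 hq'.2.2.2.2
      exact (hpz.dvd_or_dvd (dvd_cancel2 hp hp5 h2)).elim hu hq.2.1
  · rintro ⟨y, z⟩ hq
    rw [mem_Rp] at hq
    obtain ⟨⟨h1, h2, h3, h4⟩, h5⟩ := hq
    simp only at *
    have hd : (p : ℤ) ∣ (u * y - 8 * v * z) * (u * y - 8 * v * -z) := by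
      have e : (u * y - 8 * v * z) * (u * y - 8 * v * -z) = p ^ 2 * y ^ 2 - 8 * v ^ 2 * m := by
        linear_combination y ^ 2 * huv - 8 * v ^ 2 * h4
      rw [e]
      exact dvd_sub ⟨p * y ^ 2, by ring⟩ (Dvd.dvd.mul_left hmz _)
    rcases hpz.dvd_or_dvd hd with h | h
    · refine ⟨(y, z), mem_Dart.2 ⟨h1, h5, h3, h4, h⟩, ?_⟩
      simp only [abs_of_pos h2]
    · refine ⟨(y, -z), mem_Dart.2 ⟨h1, h5, h3, by simpa using h4, h⟩, ?_⟩
      simp only [abs_neg, abs_of_pos h2]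

lemma card_Dart_sq {p : ℕ} (hp : p.Prime) (hp5 : 5 ≤ p) {u v : ℤ}
    (huv : u ^ 2 + 24 * v ^ 2 = (p : ℤ) ^ 2) (hv : ¬ (p : ℤ) ∣ v) (hv3 : (3 : ℤ) ∣ v)
    (m : ℕ) (hm : p ∣ m) :
    #(Dart p u v m) = #(Dart p u v (p ^ 2 * m)) := by
  have hpz : Prime (p : ℤ) := Nat.prime_iff_prime_int.1 hp
  have p3 : Prime (3 : ℤ) := Int.prime_three
  have hu := u_not_dvd hp hp5 huv hv
  have hmz : (p : ℤ) ∣ m := by exact_mod_cast hm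
  have hp0 : (0 : ℤ) < p := by omega
  have hp2 : (0 : ℤ) < (p : ℤ) ^ 2 := by positivity
  have hu3 : ¬ (3 : ℤ) ∣ u := by
    rintro ⟨a, rfl⟩
    apply three_not_dvd hp hp5
    exact p3.dvd_of_dvd_pow (n := 2) ⟨3 * a ^ 2 + 8 * v ^ 2, by linarith⟩
  have key3 : ∀ y z : ℤ, (3 : ℤ) ∣ u * y + 8 * v * z ↔ (3 : ℤ) ∣ y := by
    intro y z
    have h8 : (3 : ℤ) ∣ 8 * v * z := Dvd.dvd.mul_right (Dvd.dvd.mul_left hv3 _) _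
    rw [dvd_add_left h8]
    exact ⟨fun h => (p3.dvd_or_dvd h).resolve_left hu3, fun h => Dvd.dvd.mul_left h _⟩
  have nz : ∀ y z : ℤ, ¬ (p : ℤ) ∣ y → (p : ℤ) ∣ u * y - 8 * v * z →
      ¬ (p : ℤ) ∣ u * y + 8 * v * z := by
    intro y z hy hd h
    have h2 : (p : ℤ) ∣ 2 * (u * y) := by
      have e : 2 * (u * y) = (u * y - 8 * v * z) + (u * y + 8 * v * z) := by ring
      rw [e]
      exact dvd_add hd h
    exact (hpz.dvd_or_dvd (dvd_cancel2 hp hp5 h2)).elim hu hy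
  refine card_bij (fun q _ => nrm (u * q.1 + 8 * v * q.2, u * q.2 - 3 * v * q.1)) ?_ ?_ ?_
  · rintro ⟨y, z⟩ hq
    rw [mem_Dart] at hq
    obtain ⟨h1, h2, h3, h4, h5⟩ := hq
    simp only at *
    have hn := nz y z h2 h5
    obtain ⟨ε, hε, he, hpos⟩ := nrm_spec (u * y + 8 * v * z, u * z - 3 * v * y)
      (fun h => hn (by simp only at h; rw [h]; exact dvd_zero _))
    rw [he, mem_Dart]
    have hε2 := eps_sq hε
    simp only at *
    refine ⟨hpos, ?_, ?_, ?_, ?_⟩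
    · rwa [dvd_eps hε]
    · rwa [dvd_eps hε, key3]
    · push_cast
      rw [← h4, ← huv]
      linear_combination (3 * (u * y + 8 * v * z) ^ 2 + 8 * (u * z - 3 * v * y) ^ 2) * hε2
    · refine ⟨ε * p * y, ?_⟩
      linear_combination ε * y * huv
  · rintro ⟨y, z⟩ hq ⟨y', z'⟩ hq' h
    rw [mem_Dart] at hq hq'
    obtain ⟨h1, h2, h3, h4, h5⟩ := hq
    obtain ⟨h1', h2', h3', h4', h5'⟩ := hq'
    simp only at *
    have hn := nz y z h2 h5
    have hn' := nz y' z' h2' h5'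
    obtain ⟨ε, hε, he, hpos⟩ := nrm_spec (u * y + 8 * v * z, u * z - 3 * v * y)
      (fun h => hn (by simp only at h; rw [h]; exact dvd_zero _))
    obtain ⟨δ, hδ, he', hpos'⟩ := nrm_spec (u * y' + 8 * v * z', u * z' - 3 * v * y')
      (fun h => hn' (by simp only at h; rw [h]; exact dvd_zero _))
    rw [he, he'] at h
    simp only [Prod.mk.injEq] at h ⊢
    obtain ⟨ha, hb⟩ := h
    have e1 : ε * y = δ * y' := by
      apply mul_left_cancel₀ hp2.ne'
      linear_combination u * ha - 8 * v * hb - (ε * y - δ * y') * huv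
    have e2 : ε * z = δ * z' := by
      apply mul_left_cancel₀ hp2.ne'
      linear_combination u * hb + 3 * v * ha - (ε * z - δ * z') * huv
    rcases hε with rfl | rfl <;> rcases hδ with rfl | rfl <;> constructor <;> linarith
  · rintro ⟨Y, Z⟩ hq
    rw [mem_Dart] at hq
    obtain ⟨h1, h2, h3, h4, h5⟩ := hq
    simp only at *
    push_cast at h4
    obtain ⟨A, B, hA, hB, eY, eZ, hAB⟩ := dart_lift hp hp5 huv hv h2 h4 h5
    have hd : (p : ℤ) ∣ u * A - 8 * v * B := by
      have : (p : ℤ) ∣ (u * A - 8 * v * B) * Y := by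
        have e : (u * A - 8 * v * B) * Y = p ^ 2 * A ^ 2 - 8 * v ^ 2 * m := by
          rw [eY]
          linear_combination A ^ 2 * huv - 8 * v ^ 2 * hAB
        rw [e]
        exact dvd_sub ⟨p * A ^ 2, by ring⟩ (Dvd.dvd.mul_left hmz _)
      exact (hpz.dvd_or_dvd this).resolve_right h2
    have hpA : ¬ (p : ℤ) ∣ A := by
      intro h
      apply h2
      have e : Y = 2 * u * A - (u * A - 8 * v * B) := by rw [eY]; ring
      rw [e]
      exact dvd_sub (Dvd.dvd.mul_left h _) hd
    have h3A : ¬ (3 : ℤ) ∣ A := by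
      rwa [eY, key3] at h3
    obtain ⟨ε, hε, he, hpos⟩ := nrm_spec (A, B)
      (fun h => hpA (by simp only at h; rw [h]; exact dvd_zero _))
    have hε2 := eps_sq hε
    simp only at he hpos
    refine ⟨nrm (A, B), ?_, ?_⟩
    · rw [he, mem_Dart]
      refine ⟨hpos, ?_, ?_, ?_, ?_⟩
      · rwa [dvd_eps hε]
      · rwa [dvd_eps hε]
      · simp only
        rw [← hAB]
        linear_combination (3 * A ^ 2 + 8 * B ^ 2) * hε2
      · have e : u * (ε * A) - 8 * v * (ε * B) = ε * (u * A - 8 * v * B) := by ring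
        simp only
        rw [e]
        exact Dvd.dvd.mul_left hd _
    · rw [he]
      simp only
      have e1 : u * (ε * A) + 8 * v * (ε * B) = ε * Y := by rw [eY]; ring
      have e2 : u * (ε * B) - 3 * v * (ε * A) = ε * Z := by rw [eZ]; ring
      rw [e1, e2]
      unfold nrm
      rcases hε with rfl | rfl
      · simp [h1]
      · simp only [neg_mul, one_mul, neg_neg]
        rw [if_neg (by omega)]

lemma card_Rp_inert {p : ℕ} (hp : p.Prime) (hp5 : 5 ≤ p)
    (hs : ¬ ∃ s : ZMod p, s * s = -6) (m : ℕ) (hm : p ∣ m) : #(Rp p m) = 0 := by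
  haveI : Fact p.Prime := ⟨hp⟩
  rw [card_eq_zero, eq_empty_iff_forall_notMem]
  rintro ⟨y, z⟩ hq
  rw [mem_Rp] at hq
  obtain ⟨⟨h1, h2, h3, h4⟩, h5⟩ := hq
  simp only at *
  have hpz : Prime (p : ℤ) := Nat.prime_iff_prime_int.1 hp
  have hmz : (p : ℤ) ∣ m := by exact_mod_cast hm
  have hz : ¬ (p : ℤ) ∣ z := by
    rintro ⟨a, rfl⟩
    apply h5
    obtain ⟨b, hb⟩ := hmz
    refine hpz.dvd_of_dvd_pow (n := 2) (dvd_cancel3 hp hp5 ⟨b - 8 * p * a ^ 2, ?_⟩)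
    linarith
  have hz2 : ((2 * z : ℤ) : ZMod p) ≠ 0 := by
    rw [Ne, ZMod.intCast_zmod_eq_zero_iff_dvd]
    exact fun h => hz (dvd_cancel2 hp hp5 h)
  have h0 : ((3 * y ^ 2 + 8 * z ^ 2 : ℤ) : ZMod p) = 0 := by
    rw [ZMod.intCast_zmod_eq_zero_iff_dvd, h4]
    exact hmz
  apply hs
  push_cast at h0 hz2
  refine ⟨3 * y / (2 * z), ?_⟩
  rw [div_mul_div_comm, div_eq_iff (mul_ne_zero hz2 hz2)]
  linear_combination 3 * h0

lemma card_Rset_pow {p : ℕ} (hp : p.Prime) (hp5 : 5 ≤ p)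
    (H : ∀ m : ℕ, p ∣ m → #(Rp p (p ^ 2 * m)) = #(Rp p m)) (m : ℕ) (hm : ¬ p ∣ m) (j : ℕ) :
    #(Rp p (p ^ (2 * j + 1) * m)) = #(Rp p (p * m)) ∧
      #(Rset (p ^ (2 * j + 1) * m)) = (j + 1) * #(Rp p (p * m)) := by
  induction j with
  | zero =>
    simp only [mul_zero, zero_add, pow_one, one_mul, true_and]
    refine card_Rset_base hp hp5 _ (dvd_mul_right _ _) fun h => hm ?_
    rw [pow_two] at h
    exact Nat.dvd_of_mul_dvd_mul_left hp.pos h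
  | succ j ih =>
    have e : p ^ (2 * (j + 1) + 1) * m = p ^ 2 * (p ^ (2 * j + 1) * m) := by ring
    have h1 := H (p ^ (2 * j + 1) * m) (Dvd.dvd.mul_right (dvd_pow_self _ (by omega)) _)
    rw [e, card_Rset_sq hp hp5, h1, ih.1, ih.2]
    exact ⟨rfl, by ring⟩

lemma rep_eleven {A B : ℤ} (h : 3 * A ^ 2 + 8 * B ^ 2 = 11) :
    (A = 1 ∨ A = -1) ∧ (B = 1 ∨ B = -1) := by
  have hA : A ≤ 1 := by nlinarith [sq_nonneg B]
  have hA' : -1 ≤ A := by nlinarith [sq_nonneg B]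
  have hB : B ≤ 1 := by nlinarith [sq_nonneg A]
  have hB' : -1 ≤ B := by nlinarith [sq_nonneg A]
  interval_cases A <;> interval_cases B <;> simp_all

lemma card_eleven_aux {p : ℕ} (hp : p.Prime) (hp5 : 5 ≤ p) (hp11 : p ≠ 11) {u v : ℤ}
    (huv : u ^ 2 + 24 * v ^ 2 = (p : ℤ) ^ 2) (hv : ¬ (p : ℤ) ∣ v)
    (hu3 : ¬ (3 : ℤ) ∣ u) (huv3 : (3 : ℤ) ∣ u - v) :
    #(Rset (p ^ 2 * 11)) = 2 := by
  have hpz : Prime (p : ℤ) := Nat.prime_iff_prime_int.1 hp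
  have hp0 : (0 : ℤ) < p := by omega
  have h3p := three_not_dvd hp hp5
  have hy3 : ¬ (3 : ℤ) ∣ u - 8 * v := by omega
  have hz3 : ¬ (3 : ℤ) ∣ u + 3 * v := by omega
  have hs : Rset (p ^ 2 * 11) = {((p : ℤ), (p : ℤ)), (|u - 8 * v|, |u + 3 * v|)} := by
    ext ⟨y, z⟩
    rw [mem_Rset, mem_insert, mem_singleton]
    simp only [Prod.mk.injEq]
    constructor
    · rintro ⟨h1, h2, h3, h4⟩
      push_cast at h4
      by_cases hy : (p : ℤ) ∣ y
      · left
        have hz := dvd_snd hp hp5 h4 ⟨p * 11, by ring⟩ hy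
        obtain ⟨a, rfl⟩ := hy
        obtain ⟨b, rfl⟩ := hz
        have hab : 3 * a ^ 2 + 8 * b ^ 2 = 11 := by
          have : (p : ℤ) ^ 2 ≠ 0 := by positivity
          apply mul_left_cancel₀ this
          linarith
        have ha := pos_of_mul_pos_right h1 hp0.le
        have hb := pos_of_mul_pos_right h2 hp0.le
        obtain ⟨h5, h6⟩ := rep_eleven hab
        obtain rfl : a = 1 := by omega
        obtain rfl : b = 1 := by omega
        simp
      · right
        rw [← abs_of_pos h1, ← abs_of_pos h2, abs_eq_abs, abs_eq_abs]
        have hd : (p : ℤ) ∣ (u * y - 8 * v * z) * (u * y - 8 * (-v) * z) := by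
          refine ⟨p * (y ^ 2 - 8 * v ^ 2 * 11), ?_⟩
          linear_combination y ^ 2 * huv - 8 * v ^ 2 * h4
        rcases hpz.dvd_or_dvd hd with h | h
        · obtain ⟨A, B, -, -, eY, eZ, hAB⟩ := dart_lift hp hp5 huv hv hy h4 h
          obtain ⟨rfl | rfl, rfl | rfl⟩ := rep_eleven hAB <;> omega
        · obtain ⟨A, B, -, -, eY, eZ, hAB⟩ := dart_lift hp hp5 (v := -v) (by simpa using huv)
            (by rwa [dvd_neg]) hy h4 h
          obtain ⟨rfl | rfl, rfl | rfl⟩ := rep_eleven hAB <;> omega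
    · rintro (⟨rfl, rfl⟩ | ⟨rfl, rfl⟩)
      · refine ⟨hp0, hp0, h3p, ?_⟩
        push_cast
        ring
      · refine ⟨abs_pos.2 fun h => hy3 (h ▸ dvd_zero _), abs_pos.2 fun h => hz3 (h ▸ dvd_zero _),
          by rwa [dvd_abs], ?_⟩
        rw [sq_abs, sq_abs]
        push_cast
        linear_combination 11 * huv
  rw [hs, card_pair]
  intro h
  rw [Prod.mk.injEq] at h
  have h1 : (p : ℤ) ∣ u - 8 * v := by rw [← dvd_abs, ← h.1]
  have h2 : (p : ℤ) ∣ u + 3 * v := by rw [← dvd_abs, ← h.2]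
  have h3 : (p : ℤ) ∣ 11 * v := by
    have e : 11 * v = (u + 3 * v) - (u - 8 * v) := by ring
    rw [e]
    exact dvd_sub h2 h1
  rcases hpz.dvd_or_dvd h3 with h | h
  · have : p ∣ 11 := by exact_mod_cast h
    exact hp11 ((Nat.prime_dvd_prime_iff_eq hp (by norm_num)).1 this)
  · exact hv h

lemma card_eleven {p : ℕ} (hp : p.Prime) (hp5 : 5 ≤ p) (hp11 : p ≠ 11) {u v : ℤ}
    (huv : u ^ 2 + 24 * v ^ 2 = (p : ℤ) ^ 2) (hv : ¬ (p : ℤ) ∣ v) (hv3 : ¬ (3 : ℤ) ∣ v) :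
    #(Rset (p ^ 2 * 11)) = 2 := by
  have hu3 : ¬ (3 : ℤ) ∣ u := by
    rintro ⟨a, rfl⟩
    apply three_not_dvd hp hp5
    exact Int.prime_three.dvd_of_dvd_pow (n := 2) ⟨3 * a ^ 2 + 8 * v ^ 2, by linarith⟩
  by_cases h : (3 : ℤ) ∣ u - v
  · exact card_eleven_aux hp hp5 hp11 huv hv hu3 h
  · exact card_eleven_aux hp hp5 hp11 (v := -v) (by simpa using huv) (by rwa [dvd_neg]) hu3
      (by
        have h1 : u % 3 = 1 ∨ u % 3 = 2 := by omega
        have h2 : v % 3 = 1 ∨ v % 3 = 2 := by omega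
        rcases h1 with h1 | h1 <;> rcases h2 with h2 | h2 <;> omega)

lemma card_Rp_sq {p : ℕ} (hp : p.Prime) (hp5 : 5 ≤ p) (hp11 : p ≠ 11)
    (hodd : Odd (#(Rset (p ^ 2 * 11)))) (m : ℕ) (hm : p ∣ m) :
    #(Rp p (p ^ 2 * m)) = #(Rp p m) := by
  by_cases hs : ∃ s : ZMod p, s * s = -6
  · obtain ⟨s, hs⟩ := hs
    obtain ⟨u, v, huv, hv⟩ := exists_uv p hp hp5 s hs
    have hv3 : (3 : ℤ) ∣ v := by
      by_contra h
      rw [card_eleven hp hp5 hp11 huv hv h] at hodd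
      exact absurd hodd (by decide)
    rw [← card_Dart hp hp5 huv hv m hm, ← card_Dart hp hp5 huv hv _ (Dvd.dvd.mul_left hm _),
      card_Dart_sq hp hp5 huv hv hv3 m hm]
  · rw [card_Rp_inert hp hp5 hs _ hm, card_Rp_inert hp hp5 hs _ (Dvd.dvd.mul_left hm _)]

end reps

theorem stmt_1 (p : ℕ) (hp : p.Prime) (hp5 : 5 ≤ p) (hp11 : p ≠ 11)
    (h : Odd (b21 ((11 * p ^ 2 - 5) / 6)))
    (n k β : ℕ) (hβ1 : 1 ≤ β) (hβp : β < p) :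
    b21 (4 * p ^ (4 * k + 4) * n + 4 * p ^ (4 * k + 3) * β
      + (11 * p ^ (4 * k + 4) - 5) / 6) % 2 = 0 := by
  obtain ⟨t, ht⟩ := sq_form24 (p : ℤ) (two_not_dvd hp hp5) (three_not_dvd hp hp5)
  have ht' : p ^ 2 = 24 * t + 1 := by exact_mod_cast ht
  have hodd : Odd (Rset (p ^ 2 * 11)).card := by
    have e : (11 * p ^ 2 - 5) / 6 = 4 * (11 * t) + 1 := by omega
    have e2 : p ^ 2 * 11 = 24 * (11 * t) + 11 := by omega
    rw [e, ← ZMod.natCast_eq_one_iff_odd, b21_parity] at h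
    rw [e2, ← ZMod.natCast_eq_one_iff_odd]
    exact h
  have hdT : ¬ (2 : ℤ) ∣ (p : ℤ) ^ (2 * k + 2) := fun hd =>
    two_not_dvd hp hp5 (Int.prime_two.dvd_of_dvd_pow hd)
  have hdT3 : ¬ (3 : ℤ) ∣ (p : ℤ) ^ (2 * k + 2) := fun hd =>
    three_not_dvd hp hp5 (Int.prime_three.dvd_of_dvd_pow hd)
  obtain ⟨T, hT⟩ := sq_form24 _ hdT hdT3
  have hT' : p ^ (4 * k + 4) = 24 * T + 1 := by
    have : (p ^ (2 * k + 2)) ^ 2 = 24 * T + 1 := by exact_mod_cast hT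
    rw [← this]
    ring
  have hm : ¬ p ∣ p * (24 * n + 11) + 24 * β := by
    intro hd
    have h1 : p ∣ 24 * β := (Nat.dvd_add_right (dvd_mul_right _ _)).1 hd
    have h2 : (p : ℤ) ∣ 8 * (3 * β) := by
      have h3 : (p : ℤ) ∣ ((24 * β : ℕ) : ℤ) := by exact_mod_cast h1
      have e : (8 * (3 * β) : ℤ) = ((24 * β : ℕ) : ℤ) := by push_cast; ring
      rwa [e]
    have h3 := dvd_cancel3 hp hp5 (dvd_cancel8 hp hp5 h2)
    have h4 : p ∣ β := by exact_mod_cast h3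
    have := Nat.le_of_dvd (by omega) h4
    omega
  have hc := (card_Rset_pow hp hp5 (card_Rp_sq hp hp5 hp11 hodd) _ hm (2 * k + 1)).2
  have e1 : 4 * p ^ (4 * k + 4) * n + 4 * p ^ (4 * k + 3) * β + (11 * p ^ (4 * k + 4) - 5) / 6
      = 4 * (p ^ (4 * k + 4) * n + p ^ (4 * k + 3) * β + 11 * T) + 1 := by
    have e : (11 * p ^ (4 * k + 4) - 5) / 6 = 4 * (11 * T) + 1 := by omega
    rw [e]
    ring
  have e2 : 24 * (p ^ (4 * k + 4) * n + p ^ (4 * k + 3) * β + 11 * T) + 11 =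
      p ^ (2 * (2 * k + 1) + 1) * (p * (24 * n + 11) + 24 * β) := by
    have e3 : p ^ (2 * (2 * k + 1) + 1) * (p * (24 * n + 11) + 24 * β) =
      24 * (p ^ (4 * k + 4) * n + p ^ (4 * k + 3) * β) + 11 * p ^ (4 * k + 4) := by ring
    rw [e3]
    omega
  rw [e1, ← Nat.even_iff, ← ZMod.natCast_eq_zero_iff_even, b21_parity, e2, hc,
    ZMod.natCast_eq_zero_iff_even]
  exact Even.mul_right ⟨k + 1, by ring⟩ _
end
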